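/- arXiv:1610.03537 — 4 statements merged into one kernel-verified Lean document; each statement's English description precedes it below -/
import Mathlib

section
/- Let (X,T) be an odometer system with partition data of sizes m_k, and write α_k = m_k/m_{k−1} (with m_0 = 1). Let c ≥ 1 be an integer such that for some N ∈ ℤ⁺, gcd(c, α_i) = 1 for all i ≥ N. Then (X,T) has a minimal bounded speedup with orbit number c: there exists a continuous bounded function p : X → ℤ⁺ such that S(x) = T^{p(x)}(x) defines a minimal homeomorphism S : X → X, and every T-orbit is the union of exactly c distinct S-orbits. -/
/-- A minimal Cantor-type dynamical system: every `T`-orbit (over `ℤ`) is dense. -/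
def IsMinimalHomeo {X : Type*} [TopologicalSpace X] (T : Equiv.Perm X) : Prop :=
  ∀ x : X, Dense (Set.range fun n : ℤ => (T ^ n) x)

/-- The (two-sided) orbit of a point under a bijection. -/
def zOrbit {X : Type*} (T : Equiv.Perm X) (x : X) : Set X :=
  Set.range fun n : ℤ => (T ^ n) x

/-- `c` is the orbit number of the speedup `S` of `T`: every `T`-orbit is the union of
exactly `c` distinct `S`-orbits. -/
def IsOrbitNumber {X : Type*} (T S : Equiv.Perm X) (c : ℕ) : Prop :=
  0 < c ∧ ∀ x : X,
    {O : Set X | (∃ y : X, O = zOrbit S y) ∧ O ⊆ zOrbit T x}.ncard = c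


/-- Odometer data for `(X,T)`: nested cyclic Kakutani–Rokhlin partitions
`P(k) = {T^i A(k) : 0 ≤ i < m k}` which refine each other and separate points. -/
def IsOdometerData {X : Type*} [TopologicalSpace X] (T : Equiv.Perm X)
    (m : ℕ → ℕ) (A : ℕ → Set X) : Prop :=
  (2 ≤ m 0) ∧ (∀ k, m k ∣ m (k + 1)) ∧ (∀ k, 2 * m k ≤ m (k + 1)) ∧
  (∀ k, (A k).Nonempty ∧ IsClopen (A k)) ∧
  (∀ k, ∀ i < m k, ∀ j < m k, i ≠ j →
    Disjoint ((⇑(T ^ i)) '' A k) ((⇑(T ^ j)) '' A k)) ∧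
  (∀ k, (⋃ i < m k, (⇑(T ^ i)) '' A k) = Set.univ) ∧
  (∀ k, (⇑(T ^ m k)) '' A k = A k) ∧
  (∀ k, ∀ i < m (k + 1), ∃ j < m k, (⇑(T ^ i)) '' A (k + 1) ⊆ (⇑(T ^ j)) '' A k) ∧
  (∀ x y : X, x ≠ y → ∃ k, ∀ i < m k,
    ¬(x ∈ (⇑(T ^ i)) '' A k ∧ y ∈ (⇑(T ^ i)) '' A k))

open Equiv.Perm Function Set Topology

/-! A base `A = A N` of a cyclic tower of height `M = m N` splits a `T`-orbit, indexed by `ℤ` from a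
point of `A`, into blocks `[M q, M q + M)`. Let `S` follow `T`, except that on arriving in `A` it
first winds `d = c - 1` extra times around the tower. Then `S` runs through a block, skips `d`
blocks and goes on, so its orbits inside the `T`-orbit are the `c` classes of indices `t` with
`t / M` fixed modulo `c`. A tower of height `M L` is met along a residue class modulo `M L`; when
`c` and `L` are coprime, the Chinese remainder theorem makes every `S`-orbit meet its base, and such
bases shrink to any given point. -/

theorem int_add_one_ediv {M : ℤ} (hM : 0 < M) (u : ℤ) :
    (u + 1) / M = u / M + if M ∣ u + 1 then 1 else 0 := by
  have hu := Int.emod_add_mul_ediv u M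
  have hnonneg := Int.emod_nonneg u hM.ne'
  have hlt := Int.emod_lt_of_pos u hM
  split_ifs with hdvd
  · have hlast : u % M + 1 = M := by
      have hdvd' : M ∣ u % M + 1 := by
        rwa [← dvd_add_left (dvd_mul_right M (u / M)), add_right_comm, hu]
      linarith [Int.le_of_dvd (by linarith) hdvd']
    exact ((Int.ediv_emod_unique hM (r := 0)).2 ⟨by linear_combination hu - hlast, le_rfl, hM⟩).1
  · have hne : u % M + 1 ≠ M := fun hlast => hdvd ⟨u / M + 1, by linear_combination hlast - hu⟩
    exact ((Int.ediv_emod_unique hM (r := u % M + 1)).2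
      ⟨by linear_combination hu, by linarith, by omega⟩).1

theorem ncard_range_eq_card_of_eq_iff {ι α κ : Type*} {f : ι → α} {g : ι → κ}
    (hg : Surjective g) (hfg : ∀ i j, f i = f j ↔ g i = g j) : (range f).ncard = Nat.card κ := by
  have hker : Setoid.ker f = Setoid.ker g := Setoid.ext hfg
  rw [← Nat.card_coe_set_eq, ← Nat.card_congr (Setoid.quotientKerEquivRange f), hker,
    Nat.card_congr (Setoid.quotientKerEquivOfSurjective g hg)]

section Perm

variable {X : Type*} {T S : Equiv.Perm X}

theorem perm_zpow_add_apply (T : Equiv.Perm X) (m n : ℤ) (x : X) :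
    (T ^ (m + n)) x = (T ^ m) ((T ^ n) x) := by
  rw [zpow_add, mul_apply]

theorem zpow_apply_eq_of_forall_apply_eq_add_one {f : ℤ → X} (hf : ∀ n, S (f n) = f (n + 1))
    (n : ℤ) : (S ^ n) (f 0) = f n := by
  induction n using Int.induction_on with
  | zero => rfl
  | succ n ih => rw [add_comm, perm_zpow_add_apply, ih, zpow_one, hf, add_comm]
  | pred n ih =>
    apply S.injective
    rw [hf, sub_add_cancel, ← ih, ← mul_apply, ← zpow_one_add, add_sub_cancel]

theorem mem_zOrbit_self (T : Equiv.Perm X) (x : X) : x ∈ zOrbit T x :=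
  SameCycle.refl T x

theorem zOrbit_eq_of_mem {x y : X} (h : y ∈ zOrbit T x) : zOrbit T y = zOrbit T x :=
  Set.ext fun _ => ⟨fun hz => SameCycle.trans h hz, fun hz => SameCycle.trans (SameCycle.symm h) hz⟩

variable [TopologicalSpace X]

theorem continuous_perm_pow (hT : Continuous T) (n : ℕ) : Continuous ⇑(T ^ n) := by
  rw [coe_pow]
  exact hT.iterate n

theorem continuous_ofSubtype_subtypePerm {A : Set X} [DecidablePred (· ∈ A)] (hA : IsClopen A)
    (hT : Continuous T) (h : ∀ x, T x ∈ A ↔ x ∈ A) :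
    Continuous (ofSubtype (T.subtypePerm h)) := by
  have hpiecewise : ⇑(ofSubtype (T.subtypePerm h)) = A.piecewise T id := by
    funext x
    by_cases hx : x ∈ A
    · simp [hx, ofSubtype_apply_of_mem]
    · simp [hx, ofSubtype_apply_of_not_mem]
  rw [hpiecewise]
  exact hT.piecewise (by simp [hA.frontier_eq]) continuous_id

end Perm

/-- `A` is the base of a cyclic tower of height `M` for `T`: the translates `T ^ i A`, `i < M`,
partition the space and `T ^ M A = A`. This is encoded through visiting times: every forward orbit
meets `A`, and the points of `A` return to it exactly at the multiples of `M`. -/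
structure IsCyclicTower {X : Type*} (T : Equiv.Perm X) (A : Set X) (M : ℕ) : Prop where
  height_pos : 0 < M
  exists_pow_apply_mem : ∀ x, ∃ n : ℕ, (T ^ n) x ∈ A
  zpow_apply_mem_iff : ∀ a ∈ A, ∀ n : ℤ, (T ^ n) a ∈ A ↔ (M : ℤ) ∣ n

open scoped Classical in
/-- The jump function of the speedup which winds `d` extra times around a tower of base `A` and
height `M` on each arrival in `A`. -/
noncomputable def windingJump {X : Type*} (T : Equiv.Perm X) (A : Set X) (M d : ℕ) (x : X) : ℕ :=
  if T x ∈ A then d * M + 1 else 1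

section WindingJump

variable {X : Type*} {T : Equiv.Perm X} {A : Set X}

variable (T A) in
theorem one_le_windingJump (M d : ℕ) (x : X) : 1 ≤ windingJump T A M d x := by
  unfold windingJump; split_ifs <;> omega

variable (T A) in
theorem windingJump_le (M d : ℕ) (x : X) : windingJump T A M d x ≤ d * M + 1 := by
  unfold windingJump; split_ifs <;> omega

theorem continuous_windingJump [TopologicalSpace X] (hT : Continuous T) (hA : IsClopen A)
    (M d : ℕ) : Continuous (windingJump T A M d) := by
  classical
  have hfrontier : frontier {x | T x ∈ A} = ∅ := (hA.preimage hT).frontier_eq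
  exact Continuous.if (by simp [hfrontier]) continuous_const continuous_const

end WindingJump

namespace IsCyclicTower

variable {X : Type*} {T : Equiv.Perm X} {A B : Set X} {M L d : ℕ}

theorem of_partition (hM : 0 < M)
    (hdisj : ∀ i < M, ∀ j < M, i ≠ j → Disjoint (⇑(T ^ i) '' A) (⇑(T ^ j) '' A))
    (hcover : (⋃ i < M, ⇑(T ^ i) '' A) = univ) (hinv : ⇑(T ^ M) '' A = A) :
    IsCyclicTower T A M := by
  have hmul (q : ℤ) : MapsTo ⇑(T ^ ((M : ℤ) * q)) A A := by
    have hbij := (T ^ M).injective.injOn.bijOn_image (s := A)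
    rw [hinv] at hbij
    simpa only [zpow_mul, zpow_natCast] using (hbij.perm_zpow q).mapsTo
  refine ⟨hM, fun x => ?_, fun a ha n => ⟨fun hn => ?_, ?_⟩⟩
  · obtain ⟨i, hi, a, ha, rfl⟩ : ∃ i < M, x ∈ ⇑(T ^ i) '' A := by
      simpa using hcover.ge (mem_univ x)
    refine ⟨M - i, ?_⟩
    rw [← mul_apply, ← pow_add, Nat.sub_add_cancel hi.le]
    exact hinv.le (mem_image_of_mem _ ha)
  · obtain ⟨j, hj⟩ := Int.eq_ofNat_of_zero_le (Int.emod_nonneg n (by omega : (M : ℤ) ≠ 0))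
    have hjM : j < M := by have := Int.emod_lt_of_pos n (by omega : (0 : ℤ) < M); omega
    have hmem : (T ^ n) a ∈ ⇑(T ^ j) '' A := by
      refine ⟨_, hmul (n / M) ha, ?_⟩
      rw [← zpow_natCast, ← perm_zpow_add_apply, ← hj, Int.emod_add_mul_ediv]
    by_contra hdvd
    have hj0 : j ≠ 0 := by rintro rfl; exact hdvd (Int.dvd_of_emod_eq_zero hj)
    exact disjoint_left.1 (hdisj j hjM 0 hM hj0) hmem (by simpa using hn)
  · rintro ⟨q, rfl⟩
    exact hmul q ha

theorem image (hA : IsCyclicTower T A M) {V : Equiv.Perm X} (hV : Commute V T) :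
    IsCyclicTower T (V '' A) M := by
  have hcomm (n : ℤ) (x : X) : (T ^ n) (V x) = V ((T ^ n) x) :=
    (DFunLike.congr_fun (hV.zpow_right n).eq x).symm
  refine ⟨hA.height_pos, fun x => ?_, ?_⟩
  · obtain ⟨n, hn⟩ := hA.exists_pow_apply_mem (V.symm x)
    refine ⟨n, _, hn, ?_⟩
    rw [← zpow_natCast, ← hcomm, V.apply_symm_apply]
  · rintro _ ⟨a, ha, rfl⟩ n
    rw [hcomm, V.injective.mem_set_image, hA.zpow_apply_mem_iff a ha]

theorem zpow_apply_mem_iff_of_dvd (hA : IsCyclicTower T A M) {n : ℤ} (hn : (M : ℤ) ∣ n) (x : X) :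
    (T ^ n) x ∈ A ↔ x ∈ A := by
  refine ⟨fun hx => ?_, fun hx => (hA.zpow_apply_mem_iff x hx n).2 hn⟩
  simpa [← perm_zpow_add_apply] using (hA.zpow_apply_mem_iff _ hx (-n)).2 hn.neg_right

theorem zpow_apply_mem_iff_dvd_sub (hA : IsCyclicTower T A M) {x : X} {r : ℤ}
    (hr : (T ^ r) x ∈ A) (n : ℤ) : (T ^ n) x ∈ A ↔ (M : ℤ) ∣ n - r := by
  rw [← hA.zpow_apply_mem_iff _ hr, ← perm_zpow_add_apply, sub_add_cancel]

theorem dvd_sub_of_zpow_apply_eq (hA : IsCyclicTower T A M) {x : X} {s t : ℤ}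
    (h : (T ^ s) x = (T ^ t) x) : (M : ℤ) ∣ s - t := by
  obtain ⟨n, hn⟩ := hA.exists_pow_apply_mem ((T ^ t) x)
  have hs : (T ^ ((n : ℤ) + s)) x ∈ A := by rwa [perm_zpow_add_apply, h, zpow_natCast]
  rw [← zpow_natCast, ← perm_zpow_add_apply] at hn
  simpa using (hA.zpow_apply_mem_iff_dvd_sub hn _).1 hs

theorem exists_eq_zpow_apply (hA : IsCyclicTower T A M) (x : X) :
    ∃ a ∈ A, ∃ s : ℤ, x = (T ^ s) a := by
  obtain ⟨n, hn⟩ := hA.exists_pow_apply_mem x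
  exact ⟨_, hn, -n, by simp⟩

theorem pow_mul_height_apply_mem_iff (hA : IsCyclicTower T A M) (d : ℕ) (x : X) :
    (T ^ (d * M)) x ∈ A ↔ x ∈ A := by
  rw [← zpow_natCast]
  exact hA.zpow_apply_mem_iff_of_dvd (by simp) x

open scoped Classical in
/-- The speedup of `T` which winds `d` extra times around the tower on each arrival in its base. -/
noncomputable def windingSpeedup (hA : IsCyclicTower T A M) (d : ℕ) : Equiv.Perm X :=
  ofSubtype ((T ^ (d * M)).subtypePerm (hA.pow_mul_height_apply_mem_iff d)) * T

theorem windingSpeedup_apply (hA : IsCyclicTower T A M) (d : ℕ) (x : X) :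
    hA.windingSpeedup d x = (T ^ windingJump T A M d x) x := by
  classical
  rw [windingSpeedup, windingJump, mul_apply]
  split_ifs with hx
  · rw [ofSubtype_apply_of_mem _ hx, subtypePerm_apply, pow_succ, mul_apply]
  · rw [ofSubtype_apply_of_not_mem _ hx, pow_one]

section Continuity

variable [TopologicalSpace X]

theorem continuous_windingSpeedup (hA : IsCyclicTower T A M) (hclopen : IsClopen A)
    (hT : Continuous T) (d : ℕ) : Continuous (hA.windingSpeedup d) := by
  classical
  exact (continuous_ofSubtype_subtypePerm hclopen (continuous_perm_pow hT _) _).comp hT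

theorem continuous_windingSpeedup_symm (hA : IsCyclicTower T A M) (hclopen : IsClopen A)
    (hT' : Continuous T.symm) (d : ℕ) : Continuous (hA.windingSpeedup d).symm := by
  classical
  change Continuous ⇑(hA.windingSpeedup d)⁻¹
  rw [windingSpeedup, mul_inv_rev, ← map_inv, inv_subtypePerm]
  refine hT'.comp (continuous_ofSubtype_subtypePerm hclopen ?_ _)
  rw [← inv_pow]
  exact continuous_perm_pow hT' _

end Continuity

theorem apply_zpow_apply_mem_iff (hA : IsCyclicTower T A M) {a : X} (ha : a ∈ A) (n : ℤ) :
    T ((T ^ n) a) ∈ A ↔ (M : ℤ) ∣ n + 1 := by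
  rw [← mul_apply, ← zpow_one_add, hA.zpow_apply_mem_iff a ha, add_comm]

-- For `0 ≤ n`, the first `n` steps from index `s` arrive in `A` exactly `(s % M + n) / M` times.
theorem windingSpeedup_zpow_apply_zpow_apply (hA : IsCyclicTower T A M) {a : X} (ha : a ∈ A)
    (s n : ℤ) :
    (hA.windingSpeedup d ^ n) ((T ^ s) a) = (T ^ (s + n + d * M * ((s % M + n) / M))) a := by
  have hM : (0 : ℤ) < M := by exact_mod_cast hA.height_pos
  have hs := Int.emod_add_mul_ediv s M
  let f (n : ℤ) : X := (T ^ (s + n + d * M * ((s % M + n) / M))) a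
  have hf0 : f 0 = (T ^ s) a := by
    simp [f, Int.ediv_eq_zero_of_lt (Int.emod_nonneg s hM.ne') (Int.emod_lt_of_pos s hM)]
  rw [← hf0]
  refine zpow_apply_eq_of_forall_apply_eq_add_one (f := f) (fun n => ?_) n
  have harrive : T (f n) ∈ A ↔ (M : ℤ) ∣ s % M + n + 1 := by
    rw [hA.apply_zpow_apply_mem_iff ha]
    have hblock : s + n + d * M * ((s % M + n) / M) + 1 =
        s % M + n + 1 + M * (s / M + d * ((s % M + n) / M)) := by linear_combination -hs
    rw [hblock, dvd_add_left (dvd_mul_right _ _)]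
  rw [hA.windingSpeedup_apply, windingJump, ← zpow_natCast, ← perm_zpow_add_apply]
  simp only [harrive, f, ← add_assoc (s % (M : ℤ)) n 1, int_add_one_ediv hM]
  congr 2
  split_ifs <;> push_cast <;> ring

theorem zOrbit_windingSpeedup_zpow_apply (hA : IsCyclicTower T A M) {a : X} (ha : a ∈ A) (s : ℤ) :
    zOrbit (hA.windingSpeedup d) ((T ^ s) a) =
      (fun t : ℤ => (T ^ t) a) '' {t | t / M ≡ s / M [ZMOD (d + 1 : ℕ)]} := by
  have hM : (0 : ℤ) < M := by exact_mod_cast hA.height_pos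
  have hs := Int.emod_add_mul_ediv s M
  ext z
  constructor
  · rintro ⟨n, rfl⟩
    refine ⟨_, ?_, (hA.windingSpeedup_zpow_apply_zpow_apply ha s n).symm⟩
    have hblock : s + n + d * M * ((s % M + n) / M) =
        s % M + n + M * (s / M + d * ((s % M + n) / M)) := by linear_combination -hs
    rw [mem_ofPred_eq, hblock, Int.add_mul_ediv_left _ _ hM.ne', Int.modEq_comm, Int.modEq_iff_dvd]
    exact ⟨(s % M + n) / M, by push_cast; ring⟩
  · rintro ⟨t, ht, rfl⟩
    obtain ⟨q, hq⟩ := ht.symm.dvd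
    push_cast at hq
    refine ⟨t % M + M * q - s % M, ?_⟩
    have hdiv : (s % M + (t % M + M * q - s % M)) / M = q := by
      rw [add_sub_cancel, Int.add_mul_ediv_left _ _ hM.ne',
        Int.ediv_eq_zero_of_lt (Int.emod_nonneg t hM.ne') (Int.emod_lt_of_pos t hM), zero_add]
    simp only [hA.windingSpeedup_zpow_apply_zpow_apply ha, hdiv]
    congr 2
    linear_combination -hs + Int.emod_add_mul_ediv t M - M * hq

theorem zOrbit_windingSpeedup_eq_iff (hA : IsCyclicTower T A M) {a : X} (ha : a ∈ A)
    (hfree : Injective fun n : ℤ => (T ^ n) a) (s t : ℤ) :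
    zOrbit (hA.windingSpeedup d) ((T ^ s) a) = zOrbit (hA.windingSpeedup d) ((T ^ t) a) ↔
      s / M ≡ t / M [ZMOD (d + 1 : ℕ)] := by
  have hmem : (T ^ s) a ∈ zOrbit (hA.windingSpeedup d) ((T ^ t) a) ↔
      s / M ≡ t / M [ZMOD (d + 1 : ℕ)] := by
    rw [hA.zOrbit_windingSpeedup_zpow_apply ha]
    exact hfree.mem_set_image
  rw [← hmem]
  exact ⟨fun h => h ▸ mem_zOrbit_self _ _, zOrbit_eq_of_mem⟩

theorem setOf_zOrbit_windingSpeedup_subset_eq_range (hA : IsCyclicTower T A M) {a : X}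
    (ha : a ∈ A) :
    {O | (∃ y, O = zOrbit (hA.windingSpeedup d) y) ∧ O ⊆ zOrbit T a} =
      range fun s : ℤ => zOrbit (hA.windingSpeedup d) ((T ^ s) a) := by
  ext O
  constructor
  · rintro ⟨⟨y, rfl⟩, hsub⟩
    obtain ⟨s, rfl⟩ := hsub (mem_zOrbit_self _ y)
    exact ⟨s, rfl⟩
  · rintro ⟨s, rfl⟩
    refine ⟨⟨_, rfl⟩, ?_⟩
    exact (hA.zOrbit_windingSpeedup_zpow_apply ha s).le.trans (image_subset_range _ _)

theorem isOrbitNumber_windingSpeedup (hA : IsCyclicTower T A M)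
    (hfree : ∀ x, Injective fun n : ℤ => (T ^ n) x) (d : ℕ) :
    IsOrbitNumber T (hA.windingSpeedup d) (d + 1) := by
  refine ⟨d.succ_pos, fun x => ?_⟩
  have hM : (M : ℤ) ≠ 0 := by exact_mod_cast hA.height_pos.ne'
  obtain ⟨a, ha, s, rfl⟩ := hA.exists_eq_zpow_apply x
  rw [zOrbit_eq_of_mem (mem_range_self s : (T ^ s) a ∈ zOrbit T a),
    hA.setOf_zOrbit_windingSpeedup_subset_eq_range ha]
  have hblock : Surjective fun s : ℤ => s / (M : ℤ) := fun q =>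
    ⟨M * q, Int.mul_ediv_cancel_left q hM⟩
  rw [ncard_range_eq_card_of_eq_iff (ZMod.intCast_surjective (n := d + 1) |>.comp hblock),
    Nat.card_zmod]
  intro s t
  rw [hA.zOrbit_windingSpeedup_eq_iff ha (hfree a), comp_apply, comp_apply,
    ZMod.intCast_eq_intCast_iff]

theorem exists_mem_zOrbit_windingSpeedup (hA : IsCyclicTower T A M)
    (hB : IsCyclicTower T B (M * L)) (hL : Nat.Coprime (d + 1) L) (x : X) :
    ∃ z ∈ zOrbit (hA.windingSpeedup d) x, z ∈ B := by
  have hM : (M : ℤ) ≠ 0 := by exact_mod_cast hA.height_pos.ne'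
  obtain ⟨a, ha, s, rfl⟩ := hA.exists_eq_zpow_apply x
  obtain ⟨q, hq⟩ := hB.exists_pow_apply_mem a
  rw [← zpow_natCast] at hq
  obtain ⟨u, v, huv⟩ := Nat.isCoprime_iff_coprime.2 hL
  rw [hA.zOrbit_windingSpeedup_zpow_apply ha]
  refine ⟨_, mem_image_of_mem _ (?_ : q + M * (L * (v * (s / M - q / M))) ∈ _), ?_⟩
  · rw [mem_ofPred_eq, Int.add_mul_ediv_left _ _ hM, Int.modEq_iff_dvd]
    exact ⟨u * (s / M - q / M), by linear_combination -(s / M - q / M : ℤ) * huv⟩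
  · rw [hB.zpow_apply_mem_iff_dvd_sub hq]
    exact ⟨v * (s / M - q / M), by push_cast; ring⟩

theorem isMinimalHomeo_windingSpeedup [TopologicalSpace X] (hA : IsCyclicTower T A M)
    (hsmall : ∀ U : Set X, IsOpen U → U.Nonempty →
      ∃ B ⊆ U, ∃ L, Nat.Coprime (d + 1) L ∧ IsCyclicTower T B (M * L)) :
    IsMinimalHomeo (hA.windingSpeedup d) := by
  refine fun x => dense_iff_inter_open.2 fun U hU hne => ?_
  obtain ⟨B, hBU, L, hL, hB⟩ := hsmall U hU hne
  obtain ⟨z, hzx, hzB⟩ := hA.exists_mem_zOrbit_windingSpeedup hB hL x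
  exact ⟨z, hBU hzB, hzx⟩

end IsCyclicTower

theorem exists_eq_mul_coprime {m : ℕ → ℕ} {c N k : ℕ} (hdvd : ∀ k, m k ∣ m (k + 1))
    (hcop : ∀ i, N ≤ i → Nat.Coprime c (m (i + 1) / m i)) (hk : N ≤ k) :
    ∃ L, m k = m N * L ∧ Nat.Coprime c L := by
  induction k, hk using Nat.le_induction with
  | base => exact ⟨1, by simp, by simp⟩
  | succ k hk ih =>
    obtain ⟨L, hL, hcL⟩ := ih
    exact ⟨L * (m (k + 1) / m k), by rw [← mul_assoc, ← hL, Nat.mul_div_cancel' (hdvd k)],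
      hcL.mul_right (hcop k hk)⟩

namespace IsOdometerData

variable {X : Type*} [TopologicalSpace X] {T : Equiv.Perm X} {m : ℕ → ℕ} {A : ℕ → Set X}

theorem lt_height (h : IsOdometerData T m A) (k : ℕ) : k < m k := by
  obtain ⟨hm0, -, hgrow, -⟩ := h
  induction k with
  | zero => omega
  | succ k ih => have := hgrow k; omega

theorem dvd_succ (h : IsOdometerData T m A) (k : ℕ) : m k ∣ m (k + 1) := h.2.1 k

theorem isClopen_base (h : IsOdometerData T m A) (k : ℕ) : IsClopen (A k) := (h.2.2.2.1 k).2

theorem isCyclicTower (h : IsOdometerData T m A) (k : ℕ) : IsCyclicTower T (A k) (m k) := by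
  have hpos := (Nat.zero_le k).trans_lt (h.lt_height k)
  obtain ⟨-, -, -, -, hdisj, hcover, hinv, -⟩ := h
  exact .of_partition hpos (hdisj k) (hcover k) (hinv k)

theorem zpow_apply_injective (h : IsOdometerData T m A) (x : X) :
    Injective fun n : ℤ => (T ^ n) x := by
  intro s t hst
  have hdvd := (h.isCyclicTower (s - t).natAbs).dvd_sub_of_zpow_apply_eq hst
  refine sub_eq_zero.1 (Int.eq_zero_of_abs_lt_dvd hdvd ?_)
  rw [Int.abs_eq_natAbs]
  exact_mod_cast h.lt_height _

theorem exists_antitone_cell (h : IsOdometerData T m A) (y : X) :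
    ∃ i : ℕ → ℕ, (∀ k, i k < m k ∧ y ∈ ⇑(T ^ i k) '' A k) ∧
      Antitone fun k => ⇑(T ^ i k) '' A k := by
  obtain ⟨-, -, -, -, hdisj, hcover, -, hrefine, -⟩ := h
  have hcell (k : ℕ) : ∃ i, i < m k ∧ y ∈ ⇑(T ^ i) '' A k := by
    simpa using (hcover k).ge (mem_univ y)
  choose i hi using hcell
  refine ⟨i, hi, antitone_nat_of_succ_le fun k => ?_⟩
  obtain ⟨j, hj, hsub⟩ := hrefine k (i (k + 1)) (hi (k + 1)).1
  have hij : i k = j := by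
    by_contra hne
    exact disjoint_left.1 (hdisj k _ (hi k).1 j hj hne) (hi k).2 (hsub (hi (k + 1)).2)
  exact hij ▸ hsub

theorem exists_isCyclicTower_subset [CompactSpace X] (h : IsOdometerData T m A)
    (hT' : Continuous T.symm) {U : Set X} (hU : IsOpen U) (hne : U.Nonempty) (N : ℕ) :
    ∃ k, N ≤ k ∧ ∃ B ⊆ U, IsCyclicTower T B (m k) := by
  obtain ⟨y, hy⟩ := hne
  obtain ⟨i, hi, hanti⟩ := h.exists_antitone_cell y
  have htower (k : ℕ) : IsCyclicTower T (⇑(T ^ i k) '' A k) (m k) :=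
    (h.isCyclicTower k).image (Commute.pow_self T _)
  have hclosed (k : ℕ) : IsClosed (⇑(T ^ i k) '' A k) := by
    rw [Equiv.image_eq_preimage_symm]
    refine (h.isClopen_base k).isClosed.preimage ?_
    change Continuous ⇑(T ^ i k)⁻¹
    rw [← inv_pow]
    exact continuous_perm_pow hT' _
  obtain ⟨k, hk⟩ : ∃ k, ⇑(T ^ i k) '' A k ⊆ U := by
    refine exists_subset_nhds_of_compactSpace hanti.directed_ge hclosed fun z hz => ?_
    suffices y = z from this ▸ hU.mem_nhds hy
    by_contra hyz
    obtain ⟨-, -, -, -, -, -, -, -, hsep⟩ := h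
    obtain ⟨k, hk⟩ := hsep y z hyz
    exact hk _ (hi k).1 ⟨(hi k).2, mem_iInter.1 hz k⟩
  exact ⟨max k N, le_max_right k N, _, (hanti (le_max_left k N)).trans hk, htower _⟩

end IsOdometerData

/-- If `(X,T)` is an odometer with partition sizes `m k` and `c ≥ 1` is
eventually coprime to the ratios `α_i = m (i+1) / m i`, then `(X,T)` admits a minimal
bounded speedup with orbit number `c`. -/
theorem odometer_exists_minimal_boundedSpeedup
    {X : Type*} [TopologicalSpace X] [CompactSpace X]
    [TopologicalSpace.MetrizableSpace X] [TotallyDisconnectedSpace X] [PerfectSpace X]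
    [Nonempty X]
    (T : Equiv.Perm X) (hTc : Continuous T) (hTc' : Continuous T.symm)
    (hTmin : IsMinimalHomeo T)
    (m : ℕ → ℕ) (A : ℕ → Set X) (hodo : IsOdometerData T m A)
    (c : ℕ) (hc : 1 ≤ c)
    (hgcd : ∃ N : ℕ, ∀ i, N ≤ i → Nat.gcd c (m (i + 1) / m i) = 1) :
    ∃ p : X → ℕ, Continuous p ∧ (∀ x, 1 ≤ p x) ∧ (∃ M : ℕ, ∀ x, p x ≤ M) ∧
      ∃ S : Equiv.Perm X, Continuous S ∧ Continuous S.symm ∧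
        (∀ x, S x = (T ^ p x) x) ∧ IsMinimalHomeo S ∧ IsOrbitNumber T S c := by
  obtain ⟨N, hN⟩ := hgcd
  obtain ⟨d, rfl⟩ := Nat.exists_eq_add_of_le' hc
  have hA := hodo.isCyclicTower N
  have hclopen := hodo.isClopen_base N
  refine ⟨windingJump T (A N) (m N) d, continuous_windingJump hTc hclopen _ d,
    one_le_windingJump T _ _ d, ⟨_, windingJump_le T _ _ d⟩, hA.windingSpeedup d,
    hA.continuous_windingSpeedup hclopen hTc d, hA.continuous_windingSpeedup_symm hclopen hTc' d,
    hA.windingSpeedup_apply d, ?_, hA.isOrbitNumber_windingSpeedup hodo.zpow_apply_injective d⟩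
  refine hA.isMinimalHomeo_windingSpeedup fun U hU hne => ?_
  obtain ⟨k, hk, B, hBU, hB⟩ := hodo.exists_isCyclicTower_subset hTc' hU hne N
  obtain ⟨L, hL, hcL⟩ := exists_eq_mul_coprime hodo.dvd_succ hN hk
  exact ⟨B, hBU, L, hcL, hL ▸ hB⟩
end

section
/- Let (X,d) be a Cantor space with metric d, let (X,T) be a minimal Cantor system such that T is expansive, and let S be a bounded speedup of T. Then S is expansive. -/
/-- A homeomorphism `R` of a compact metric space is expansive if there is `δ > 0` such that
any two distinct points are separated to distance `> δ` by some power `R^n`, `n ∈ ℤ`. -/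
def IsExpansive {X : Type*} [MetricSpace X] (R : Equiv.Perm X) : Prop :=
  ∃ δ : ℝ, 0 < δ ∧ ∀ x y : X, x ≠ y → ∃ n : ℤ, δ < dist ((R ^ n) x) ((R ^ n) y)

/-!
Since `T` has no periodic points, `p x = k` exactly when `S x = T ^ k x`. Thus the level sets of
`p` are closed, and `p`, being bounded, is continuous, hence constant on sufficiently close pairs
of points. If the `S`-orbits of `x` and `y` stay close forever, then `p` agrees along them, so the
two points jump synchronously and every pair `(T ^ m x, T ^ m y)` is reached from some pair
`(S ^ n x, S ^ n y)` by the same number of `T`-steps, fewer than one jump. Uniform continuity of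
these boundedly many powers of `T` keeps the `T`-orbits close as well, so `x = y`.
-/

open Function Set
open scoped Pointwise Uniformity

theorem finite_range_zpow_smul_of_mem_periodicPts {G α : Type*} [Group G] [MulAction G α] {g : G}
    {x : α} (hx : x ∈ periodicPts (g • ·)) : (range fun n : ℤ => g ^ n • x).Finite := by
  have hpos : (0 : ℤ) < minimalPeriod (g • ·) x :=
    mod_cast minimalPeriod_pos_of_mem_periodicPts hx
  refine ((finite_Ico (0 : ℤ) (minimalPeriod (g • ·) x)).image fun n => g ^ n • x).subset ?_
  rintro _ ⟨n, rfl⟩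
  exact ⟨n % minimalPeriod (g • ·) x, ⟨Int.emod_nonneg n hpos.ne', Int.emod_lt_of_pos n hpos⟩,
    MulAction.zpow_smul_mod_minimalPeriod g x n⟩

theorem IsMinimalHomeo.periodicPts_eq_empty {X : Type*} [TopologicalSpace X] [T1Space X]
    [PerfectSpace X] {T : Equiv.Perm X} (hT : IsMinimalHomeo T) : periodicPts T = ∅ := by
  refine eq_empty_of_forall_notMem fun x hx => ?_
  have horbit : (range fun n : ℤ => (T ^ n) x).Finite :=
    finite_range_zpow_smul_of_mem_periodicPts (g := T) hx
  have hempty : Dense (∅ : Set X) := by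
    simpa only [sdiff_self, bot_eq_empty] using (hT x).sdiff_finite horbit
  have : Nonempty X := ⟨x⟩
  exact not_nonempty_empty hempty.nonempty

theorem iterate_injective_of_periodicPts_eq_empty {α : Type*} {f : α → α}
    (hf : periodicPts f = ∅) (x : α) : Injective fun n => f^[n] x := by
  refine .of_lt_imp_ne fun m n hmn heq => ?_
  have hreturn : IsPeriodicPt f (n - m) (f^[m] x) := by
    rw [IsPeriodicPt, IsFixedPt, ← iterate_add_apply, Nat.sub_add_cancel hmn.le, heq]
  exact notMem_empty _ (hf ▸ mk_mem_periodicPts (Nat.sub_pos_of_lt hmn) hreturn)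

theorem continuous_of_finite_range_of_isClosed_fiber {X Y : Type*} [TopologicalSpace X]
    [TopologicalSpace Y] {f : X → Y} (hf : (range f).Finite)
    (hfib : ∀ y, IsClosed (f ⁻¹' {y})) : Continuous f := by
  refine continuous_iff_isClosed.2 fun s _ => ?_
  rw [← preimage_inter_range, ← biUnion_preimage_singleton]
  exact (hf.inter_of_right s).isClosed_biUnion fun y _ => hfib y

theorem continuous_of_continuous_iterate_apply {X : Type*} [TopologicalSpace X] [T2Space X]
    {f : X → X} (hf : Continuous f) (hper : periodicPts f = ∅) {p : X → ℕ}
    (hp : BddAbove (range p)) (hfp : Continuous fun x => f^[p x] x) : Continuous p := by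
  refine continuous_of_finite_range_of_isClosed_fiber hp.finite fun k => ?_
  have hfiber : p ⁻¹' {k} = {x | f^[p x] x = f^[k] x} := by
    ext x
    exact (iterate_injective_of_periodicPts_eq_empty hper x).eq_iff.symm
  rw [hfiber]
  exact isClosed_eq hfp (hf.iterate k)

theorem eventually_uniformity_apply_eq_of_continuous {X Y : Type*} [UniformSpace X]
    [CompactSpace X] [TopologicalSpace Y] [DiscreteTopology Y] {f : X → Y} (hf : Continuous f) :
    ∀ᶠ z in 𝓤 X, f z.1 = f z.2 := by
  rw [← nhdsSet_diagonal_eq_uniformity]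
  have hopen : IsOpen {z : X × X | f z.1 = f z.2} :=
    (isOpen_discrete (diagonal Y)).preimage (hf.prodMap hf)
  exact hopen.mem_nhdsSet.2 fun z hz => congrArg f hz

theorem exists_zpow_smul_eq_pow_smul {G α : Type*} [Group G] [MulAction G α] {g : G}
    {z : ℤ → α} {q : ℤ → ℕ} (hq : ∀ n, 0 < q n) (hz : ∀ n, z (n + 1) = g ^ q n • z n)
    (i m : ℤ) : ∃ n, ∃ k < q n, g ^ m • z i = g ^ k • z n := by
  -- The points passed through between consecutive `z n` form a `g`-invariant set.
  let A : Set α := {a | ∃ n, ∃ k < q n, a = g ^ k • z n}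
  have hzA (n : ℤ) : z n ∈ A := ⟨n, 0, hq n, by rw [pow_zero, one_smul]⟩
  have hforward {a : α} (ha : a ∈ A) : g • a ∈ A := by
    obtain ⟨n, k, hk, rfl⟩ := ha
    rw [smul_smul, ← pow_succ']
    rcases (Nat.add_one_le_iff.2 hk).lt_or_eq with hlt | heq
    · exact ⟨n, k + 1, hlt, rfl⟩
    · rw [heq, ← hz]
      exact hzA (n + 1)
  have hbackward {a : α} (ha : a ∈ A) : g⁻¹ • a ∈ A := by
    obtain ⟨n, k, hk, rfl⟩ := ha
    cases k with
    | succ k => exact ⟨n, k, by omega, by rw [pow_succ', mul_smul, inv_smul_smul]⟩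
    | zero =>
      obtain ⟨l, hl⟩ := Nat.exists_eq_add_one.2 (hq (n - 1))
      have hzn : z n = g ^ (l + 1) • z (n - 1) := by rw [← hl, ← hz, sub_add_cancel]
      refine ⟨n - 1, l, by omega, ?_⟩
      rw [pow_zero, one_smul, hzn, pow_succ', mul_smul, inv_smul_smul]
  have hstab : g ∈ MulAction.stabilizer G A :=
    MulAction.mem_stabilizer_set.2 fun a =>
      ⟨fun ha => by simpa only [inv_smul_smul] using hbackward ha, hforward⟩
  exact (MulAction.mem_stabilizer_set.1 (zpow_mem hstab m) (z i)).2 (hzA i)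

theorem exists_zpow_eq_pow_of_speedup {X : Type*} {T S : Equiv.Perm X} {p : X → ℕ}
    (hp : ∀ x, 1 ≤ p x) (hSp : ∀ x, S x = (T ^ p x) x) {x y : X}
    (hxy : ∀ n : ℤ, p ((S ^ n) x) = p ((S ^ n) y)) (m : ℤ) :
    ∃ n : ℤ, ∃ k < p ((S ^ n) x),
      (T ^ m) x = (T ^ k) ((S ^ n) x) ∧ (T ^ m) y = (T ^ k) ((S ^ n) y) := by
  have hS (n : ℤ) (w : X) : (S ^ (n + 1)) w = (T ^ p ((S ^ n) w)) ((S ^ n) w) := by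
    rw [← hSp, add_comm, zpow_one_add, Equiv.Perm.mul_apply]
  have hpair (n : ℤ) : ((S ^ (n + 1)) x, (S ^ (n + 1)) y) =
      T ^ p ((S ^ n) x) • ((S ^ n) x, (S ^ n) y) := by
    rw [hS n x, hS n y, ← hxy n]
    rfl
  -- Following the pair in `X × X` gives the same `n` and `k` for both points.
  obtain ⟨n, k, hk, h⟩ := exists_zpow_smul_eq_pow_smul
    (z := fun n : ℤ => ((S ^ n) x, (S ^ n) y)) (fun n => hp ((S ^ n) x)) hpair 0 m
  exact ⟨n, k, hk, congrArg Prod.fst h, congrArg Prod.snd h⟩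

theorem isExpansive_iff_exists_mem_uniformity {X : Type*} [MetricSpace X] {R : Equiv.Perm X} :
    IsExpansive R ↔ ∃ U ∈ 𝓤 X, ∀ x y, (∀ n : ℤ, ((R ^ n) x, (R ^ n) y) ∈ U) → x = y := by
  have hanti : Antitone fun U : SetRel X X =>
      ∀ x y, (∀ n : ℤ, ((R ^ n) x, (R ^ n) y) ∈ U) → x = y :=
    fun U V hUV hV x y h => hV x y fun n => hUV (h n)
  rw [Metric.uniformity_basis_dist_le.exists_iff hanti]
  refine exists_congr fun δ => and_congr_right fun _ => forall₂_congr fun x y => ?_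
  rw [ne_eq, not_imp_comm]
  simp only [mem_ofPred_eq, not_exists, not_lt]

theorem boundedSpeedup_expansive_general {X : Type*} [MetricSpace X] [CompactSpace X]
    {T S : Equiv.Perm X} (hTc : Continuous T) (hTper : periodicPts T = ∅) (hTexp : IsExpansive T)
    {p : X → ℕ} (hp1 : ∀ x, 1 ≤ p x) (hpbdd : BddAbove (range p))
    (hSc : Continuous S) (hSp : ∀ x, S x = (T ^ p x) x) : IsExpansive S := by
  rw [isExpansive_iff_exists_mem_uniformity] at hTexp ⊢
  obtain ⟨U, hU, hsep⟩ := hTexp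
  obtain ⟨M, hM⟩ := hpbdd
  have hp : Continuous p := by
    refine continuous_of_continuous_iterate_apply hTc hTper ⟨M, hM⟩ ?_
    simpa only [← Equiv.Perm.coe_pow, ← hSp] using hSc
  have hpU : ∀ᶠ z in 𝓤 X, p z.1 = p z.2 :=
    eventually_uniformity_apply_eq_of_continuous hp
  have hTU : ∀ᶠ z in 𝓤 X, ∀ k ∈ Iic M, ((T ^ k) z.1, (T ^ k) z.2) ∈ U := by
    refine (finite_Iic M).eventually_all.2 fun k _ => ?_
    have hTk : Continuous (T ^ k) := by
      simpa only [Equiv.Perm.coe_pow] using hTc.iterate k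
    exact CompactSpace.uniformContinuous_of_continuous hTk hU
  refine ⟨_, hpU.and hTU, fun x y hclose => hsep x y fun m => ?_⟩
  obtain ⟨n, k, hk, hx, hy⟩ := exists_zpow_eq_pow_of_speedup hp1 hSp (fun n => (hclose n).1) m
  rw [hx, hy]
  exact (hclose n).2 k (hk.le.trans (hM (mem_range_self _)))

/-- A bounded speedup of an expansive minimal Cantor system is expansive. -/
theorem boundedSpeedup_expansive
    {X : Type*} [MetricSpace X] [CompactSpace X]
    [TotallyDisconnectedSpace X] [PerfectSpace X] [Nonempty X]
    (T : Equiv.Perm X) (hTc : Continuous T) (hTc' : Continuous T.symm)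
    (hTmin : IsMinimalHomeo T) (hTexp : IsExpansive T)
    (p : X → ℕ) (hp1 : ∀ x, 1 ≤ p x) (hpbdd : ∃ M : ℕ, ∀ x, p x ≤ M)
    (S : Equiv.Perm X) (hSc : Continuous S) (hSc' : Continuous S.symm)
    (hSp : ∀ x, S x = (T ^ p x) x) :
    IsExpansive S :=
  boundedSpeedup_expansive_general hTc hTmin.periodicPts_eq_empty hTexp hp1
    (hpbdd.imp fun _ => forall_mem_range.2) hSc hSp
end

section
/- Let A be a finite alphabet and let X ⊆ A^ℤ be a nonempty subshift. For n ≥ 1 let W_n(X) denote the set of words of length n appearing in X, i.e. W_n(X) = {(x_i, x_{i+1}, …, x_{i+n−1}) : x ∈ X, i ∈ ℤ}. If there exist n, j > 0 such that the cardinality of W_n(X) is at least the cardinality of W_{n+j}(X), then X is a finite set. -/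
/-- The left shift on bi-infinite sequences. -/
def shiftMap {A : Type*} : (ℤ → A) → (ℤ → A) := fun x k => x (k + 1)

/-- The set of words of length `n` appearing in a subshift `X`. -/
def wordsOf {A : Type*} (X : Set (ℤ → A)) (n : ℕ) : Set (Fin n → A) :=
  {w : Fin n → A | ∃ x ∈ X, ∃ i : ℤ, ∀ t : Fin n, w t = x (i + (t : ℕ))}

/-!
For `n < m`, cutting out the subword of length `n` at a fixed offset maps `W_m(X)` onto `W_n(X)`.
If `|W_m(X)| ≤ |W_n(X)|`, each of these maps is therefore a bijection, so a window of length `m` of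
a point of `X` is determined by any of its subwindows of length `n`. The offsets `0` and `1` show
that the window of length `n` at `k` and the one at `k + 1` determine each other. Hence the window
at `0` determines the whole point, and `|X| ≤ |W_n(X)|`.
-/

section Words

variable {A : Type*}

/-- The word of length `n` that the sequence `x` shows at the positions `i, …, i + n - 1`. -/
def window (x : ℤ → A) (i : ℤ) (n : ℕ) : Fin n → A := fun t => x (i + (t : ℕ))

/-- The subword of length `n` of a word `w` of length `m`, cut out at the offset `c`. -/
def subword {m n c : ℕ} (h : c + n ≤ m) (w : Fin m → A) : Fin n → A :=
  fun t => w ⟨c + t, by omega⟩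

theorem subword_window {m n c : ℕ} (h : c + n ≤ m) (x : ℤ → A) (i : ℤ) :
    subword h (window x i m) = window x (i + c) n := by
  funext t
  simp only [subword, window, Nat.cast_add, add_assoc]

variable {X : Set (ℤ → A)} {x y : ℤ → A} {m n : ℕ}

theorem mem_wordsOf_iff_exists_window {w : Fin n → A} :
    w ∈ wordsOf X n ↔ ∃ x ∈ X, ∃ i : ℤ, w = window x i n := by
  simp only [wordsOf, window, Set.mem_ofPred_eq, funext_iff]

theorem window_mem_wordsOf (hx : x ∈ X) (i : ℤ) (n : ℕ) : window x i n ∈ wordsOf X n :=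
  mem_wordsOf_iff_exists_window.2 ⟨x, hx, i, rfl⟩

theorem image_subword_wordsOf {c : ℕ} (h : c + n ≤ m) :
    subword h '' wordsOf X m = wordsOf X n := by
  apply Set.Subset.antisymm
  · rintro _ ⟨w, hw, rfl⟩
    obtain ⟨x, hx, i, rfl⟩ := mem_wordsOf_iff_exists_window.1 hw
    rw [subword_window]
    exact window_mem_wordsOf hx _ n
  · intro v hv
    obtain ⟨x, hx, i, rfl⟩ := mem_wordsOf_iff_exists_window.1 hv
    refine ⟨window x (i - c) m, window_mem_wordsOf hx _ m, ?_⟩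
    rw [subword_window, sub_add_cancel]

theorem finite_wordsOf_of_le (hnm : n ≤ m) (hfin : (wordsOf X m).Finite) :
    (wordsOf X n).Finite := by
  rw [← image_subword_wordsOf ((zero_add n).trans_le hnm)]
  exact hfin.image _

theorem injOn_subword_of_ncard_le {c : ℕ} (h : c + n ≤ m) (hfin : (wordsOf X m).Finite)
    (hcard : (wordsOf X m).ncard ≤ (wordsOf X n).ncard) :
    Set.InjOn (subword h) (wordsOf X m) := by
  refine Set.injOn_of_ncard_image_eq (le_antisymm (Set.ncard_image_le hfin) ?_) hfin
  rwa [image_subword_wordsOf]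

theorem window_add_eq_iff_of_ncard_le {c : ℕ} (h : c + n ≤ m) (hfin : (wordsOf X m).Finite)
    (hcard : (wordsOf X m).ncard ≤ (wordsOf X n).ncard) (hx : x ∈ X) (hy : y ∈ X) (i : ℤ) :
    window x (i + c) n = window y (i + c) n ↔ window x i m = window y i m := by
  rw [← subword_window h, ← subword_window h]
  exact (injOn_subword_of_ncard_le h hfin hcard).eq_iff
    (window_mem_wordsOf hx i m) (window_mem_wordsOf hy i m)

theorem window_eq_iff_of_ncard_le (hnm : n ≤ m) (hfin : (wordsOf X m).Finite)
    (hcard : (wordsOf X m).ncard ≤ (wordsOf X n).ncard) (hx : x ∈ X) (hy : y ∈ X) (i : ℤ) :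
    window x i n = window y i n ↔ window x i m = window y i m := by
  simpa only [Nat.cast_zero, add_zero] using
    window_add_eq_iff_of_ncard_le ((zero_add n).trans_le hnm) hfin hcard hx hy i

theorem window_add_one_eq_iff_of_ncard_le (hnm : n < m) (hfin : (wordsOf X m).Finite)
    (hcard : (wordsOf X m).ncard ≤ (wordsOf X n).ncard) (hx : x ∈ X) (hy : y ∈ X) (i : ℤ) :
    window x (i + 1) n = window y (i + 1) n ↔ window x i n = window y i n := by
  rw [window_eq_iff_of_ncard_le hnm.le hfin hcard hx hy i, ← Nat.cast_one]
  exact window_add_eq_iff_of_ncard_le (by omega) hfin hcard hx hy i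

theorem window_eq_of_window_zero_eq (hnm : n < m) (hfin : (wordsOf X m).Finite)
    (hcard : (wordsOf X m).ncard ≤ (wordsOf X n).ncard) (hx : x ∈ X) (hy : y ∈ X)
    (h : window x 0 n = window y 0 n) (k : ℤ) : window x k n = window y k n := by
  have shift := window_add_one_eq_iff_of_ncard_le hnm hfin hcard hx hy
  induction k using Int.induction_on with
  | zero => exact h
  | succ k ih => exact (shift k).2 ih
  | pred k ih => exact (shift (-k - 1)).1 (by rwa [sub_add_cancel])

theorem injOn_window_zero_of_ncard_le (hnm : n < m) (hfin : (wordsOf X m).Finite)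
    (hcard : (wordsOf X m).ncard ≤ (wordsOf X n).ncard) :
    Set.InjOn (fun x => window x 0 n) X := by
  intro x hx y hy h
  funext k
  -- The longer window is nonempty even when `n = 0`.
  have window_eq : window x k m = window y k m :=
    (window_eq_iff_of_ncard_le hnm.le hfin hcard hx hy k).1
      (window_eq_of_window_zero_eq hnm hfin hcard hx hy h k)
  simpa only [window, Nat.cast_zero, add_zero] using congrFun window_eq ⟨0, by omega⟩

end Words

theorem subshift_finite_of_word_count_nonincreasing_general {A : Type*} {X : Set (ℤ → A)}
    {m n : ℕ} (hnm : n < m) (hfin : (wordsOf X m).Finite)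
    (hcard : (wordsOf X m).ncard ≤ (wordsOf X n).ncard) :
    X.Finite :=
  Set.Finite.of_injOn (fun _ hx => window_mem_wordsOf hx 0 n)
    (injOn_window_zero_of_ncard_le hnm hfin hcard) (finite_wordsOf_of_le hnm.le hfin)

/-- If, in a nonempty subshift `X`, the number of words of some length `n`
is at least the number of words of length `n + j` for some `j > 0`, then `X` is finite. -/
theorem subshift_finite_of_word_count_nonincreasing
    {A : Type*} [Fintype A] [Nonempty A] [TopologicalSpace A] [DiscreteTopology A]
    (X : Set (ℤ → A)) (hXne : X.Nonempty) (hXclosed : IsClosed X)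
    (hXinv : shiftMap '' X = X)
    (n j : ℕ) (hn : 0 < n) (hj : 0 < j)
    (hcard : (wordsOf X (n + j)).ncard ≤ (wordsOf X n).ncard) :
    X.Finite :=
  subshift_finite_of_word_count_nonincreasing_general (Nat.lt_add_of_pos_right hj)
    (Set.toFinite _) hcard
end

section
/- Let θ be a proper, primitive, aperiodic substitution on a finite alphabet A, let (X^θ, T) be the associated substitution subshift (a minimal Cantor system), and let S be a bounded speedup of T which is minimal. Then (X^θ, S) is self-induced: there exist a nonempty proper clopen subset U ⊊ X^θ and a homeomorphism φ : X^θ → U such that φ(S(x)) = S_U(φ(x)) for all x ∈ X^θ, where S_U : U → U is the first-return map of S to U, defined by S_U(y) = S^{r(y)}(y) with r(y) = min{n ≥ 1 : S^n(y) ∈ U}. -/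
/-- The `k`-th iterate of the substitution `θ` applied to the letter `a`. -/
def substIter {A : Type*} (θ : A → List A) (k : ℕ) (a : A) : List A :=
  (fun w : List A => w.flatMap θ)^[k] [a]

/-- A substitution is primitive if every letter eventually appears in every iterate, and all
iterate lengths tend to infinity. -/
def SubstPrimitive {A : Type*} (θ : A → List A) : Prop :=
  (∀ a b : A, ∃ k : ℕ, b ∈ substIter θ k a) ∧
  ∀ a : A, Filter.Tendsto (fun k => (substIter θ k a).length) Filter.atTop Filter.atTop

/-- A substitution is proper if for some `k`, all the words `θ^k(a)` begin with a common
letter `l` and end with a common letter `r`. -/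
def SubstProper {A : Type*} (θ : A → List A) : Prop :=
  ∃ (l r : A) (k : ℕ), ∀ a : A,
    (substIter θ k a).head? = some l ∧ (substIter θ k a).getLast? = some r

/-- The substitution subshift: bi-infinite sequences all of whose finite subwords appear as
subwords of some `θ^k(a)`. -/
def substShift {A : Type*} (θ : A → List A) : Set (ℤ → A) :=
  {x | ∀ (i : ℤ) (n : ℕ), ∃ (k : ℕ) (a : A),
    (List.ofFn fun t : Fin n => x (i + (t : ℕ))) <:+: substIter θ k a}

/-- A substitution is aperiodic if its subshift contains no shift-periodic points. -/
def SubstAperiodic {A : Type*} (θ : A → List A) : Prop :=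
  ∀ x ∈ substShift θ, ∀ n : ℕ, 0 < n → shiftMap^[n] x ≠ x

/-!
Some iterate of `θ` has a two-sided fixed point `ω` in the subshift, and `ω` is linearly recurrent.
The words `ω[-n, n)` therefore have boundedly many return words, and `θ` acts on these by a
substitution of bounded size which determines the sequence of return words along `ω`. The returns of
the `S`-orbit of `ω` are determined by how a jump of bounded length crosses each return word, which
is again a bounded amount of data. By the pigeonhole principle two radii `n` and `m`, with `m` much
larger than `n`, have the same data, so that the first-return maps of `S` to the two cylinders of
radius `n` and `m` are conjugate by a homeomorphism `g`, and returns take longer in the smaller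
cylinder. Mapping `S ^ a b` to `S ^ a (g b)`, for `b` in the first cylinder and `a` less than the
return time of `b`, embeds the whole space as a proper clopen subset on which the first-return map
of `S` is conjugate to `S`.
-/

namespace Speedup

section IntegerSequences

variable {f : ℤ → ℤ} {c i j : ℤ}

lemma mul_le_sub_of_le_gap (h : ∀ j, c ≤ f (j + 1) - f j) (hij : i ≤ j) :
    (j - i) * c ≤ f j - f i := by
  have hmono : Monotone fun j => f j - j * c := monotone_int_of_le_succ fun j => by linarith [h j]
  linarith [hmono hij]

lemma sub_le_mul_of_gap_le (h : ∀ j, f (j + 1) - f j ≤ c) (hij : i ≤ j) :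
    f j - f i ≤ (j - i) * c := by
  have hanti : Antitone fun j => f j - j * c := antitone_int_of_succ_le fun j => by linarith [h j]
  linarith [hanti hij]

lemma sub_le_sub_of_strictMono (hf : StrictMono f) (hij : i ≤ j) : j - i ≤ f j - f i := by
  linarith [mul_le_sub_of_le_gap (f := f) (c := 1)
    (fun j => by linarith [Int.add_one_le_of_lt (hf (lt_add_one j))]) hij]

lemma sub_eq_sub_of_gap_eq {i' a b u v : ℤ}
    (h : ∀ t, a ≤ t → t < b → f (i + t + 1) - f (i + t) = f (i' + t + 1) - f (i' + t))
    (hau : a ≤ u) (huv : u ≤ v) (hvb : v ≤ b) :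
    f (i + v) - f (i + u) = f (i' + v) - f (i' + u) := by
  induction v, huv using Int.leInduction with
  | base => simp
  | succ v huv ih =>
    rw [← add_assoc, ← add_assoc]
    linarith [ih (by lia), h v (by lia) (by lia)]

lemma exists_le_lt_succ (hf : StrictMono f) (i : ℤ) : ∃ j, f j ≤ i ∧ i < f (j + 1) := by
  have hbdd : ∀ z, f z ≤ i → z ≤ max 0 (i - f 0) := fun z hz => by
    rcases le_total 0 z with h | h
    · linarith [sub_le_sub_of_strictMono hf h, le_max_right 0 (i - f 0)]
    · exact h.trans (le_max_left _ _)
  have hne : f (min 0 (i - f 0)) ≤ i := by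
    linarith [sub_le_sub_of_strictMono hf (min_le_left 0 (i - f 0)), min_le_right 0 (i - f 0)]
  obtain ⟨j, hj, hmax⟩ := Int.exists_greatest_of_bdd ⟨_, hbdd⟩ ⟨_, hne⟩
  exact ⟨j, hj, not_le.mp fun h => (lt_add_one j).not_ge (hmax _ h)⟩

lemma exists_antidifference (c : ℤ → ℤ) : ∃ f : ℤ → ℤ, f 0 = 0 ∧ ∀ j, f (j + 1) - f j = c j := by
  refine ⟨fun j => Int.inductionOn' (motive := fun _ => ℤ) j 0 0 (fun k _ s => s + c k)
    (fun k _ s => s - c (k - 1)), Int.inductionOn'_self .., fun j => ?_⟩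
  dsimp only
  rcases le_or_gt 0 j with hj | hj
  · rw [Int.inductionOn'_add_one hj, add_sub_cancel_left]
  · nth_rw 2 [← add_sub_cancel_right j 1]
    rw [Int.inductionOn'_sub_one (by lia), sub_sub_cancel, add_sub_cancel_right]

lemma exists_enumeration {E : Set ℤ} (h0 : 0 ∈ E) (habove : ¬BddAbove E) (hbelow : ¬BddBelow E) :
    ∃ e : ℤ → ℤ, StrictMono e ∧ e 0 = 0 ∧ Set.range e = E := by
  classical
  have : NoMaxOrder E := ⟨fun i => by
    obtain ⟨k, hk, hik⟩ := not_bddAbove_iff.mp habove i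
    exact ⟨⟨k, hk⟩, hik⟩⟩
  have : NoMinOrder E := ⟨fun i => by
    obtain ⟨k, hk, hki⟩ := not_bddBelow_iff.mp hbelow i
    exact ⟨⟨k, hk⟩, hki⟩⟩
  have : Nonempty E := ⟨⟨0, h0⟩⟩
  let _ : SuccOrder E := LinearLocallyFiniteOrder.succOrder E
  let _ : PredOrder E := LinearLocallyFiniteOrder.predOrder E
  let o : E ≃o ℤ := orderIsoIntOfLinearSuccPredArch
  let o₀ : ℤ ≃o E := (OrderIso.addRight (o ⟨0, h0⟩)).trans o.symm
  exact ⟨fun j => o₀ j, o₀.strictMono, by simp [o₀],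
    (o₀.surjective.range_comp Subtype.val).trans Subtype.range_coe⟩

end IntegerSequences

variable {A : Type*}

/-! ### Linear recurrence of fixed points -/

/-- `ω` reads the same on the window `[a, b)` around `i` and around `i'`. -/
def Agree (ω : ℤ → A) (i i' a b : ℤ) : Prop :=
  ∀ t, a ≤ t → t < b → ω (i + t) = ω (i' + t)

namespace Agree

variable {ω : ℤ → A} {i i' i'' a b a' b' : ℤ}

lemma refl (ω : ℤ → A) (i a b : ℤ) : Agree ω i i a b := fun _ _ _ => rfl

lemma symm (h : Agree ω i i' a b) : Agree ω i' i a b :=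
  fun t hat htb => (h t hat htb).symm

lemma trans (h : Agree ω i i' a b) (h' : Agree ω i' i'' a b) : Agree ω i i'' a b :=
  fun t hat htb => (h t hat htb).trans (h' t hat htb)

lemma mono (h : Agree ω i i' a b) (ha : a ≤ a') (hb : b' ≤ b) : Agree ω i i' a' b' :=
  fun t hat htb => h t (ha.trans hat) (htb.trans_le hb)

lemma add_right (h : Agree ω i i' a b) (d : ℤ) :
    Agree ω (i + d) (i' + d) (a - d) (b - d) := by
  intro t hat htb
  simpa only [add_assoc] using h (d + t) (by lia) (by lia)

end Agree

/-- `f` cuts `ω` into blocks `[f j, f (j + 1))`, each of which is determined by the letter `ω j`,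
with a cut at `0`: this is how a fixed point of a substitution is encoded, `f j` being the position
at which the image of the letter `ω j` starts. -/
structure Inflation (ω : ℤ → A) (f : ℤ → ℤ) : Prop where
  zero : f 0 = 0
  lt_succ : ∀ j, f j < f (j + 1)
  gap_eq : ∀ {j j'}, ω j = ω j' → f (j + 1) - f j = f (j' + 1) - f j'
  agree : ∀ {j j'}, ω j = ω j' → Agree ω (f j) (f j') 0 (f (j + 1) - f j)

namespace Inflation

variable {ω : ℤ → A} {f g : ℤ → ℤ}

lemma strictMono (h : Inflation ω f) : StrictMono f :=
  strictMono_int_of_lt_succ h.lt_succ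

lemma sub_eq (h : Inflation ω f) {i i' a b t u : ℤ} (hag : Agree ω i i' a b)
    (hat : a ≤ t) (htu : t ≤ u) (hub : u ≤ b) :
    f (i + u) - f (i + t) = f (i' + u) - f (i' + t) :=
  sub_eq_sub_of_gap_eq (fun s has hsb => h.gap_eq (hag s has hsb)) hat htu hub

lemma agree_image (h : Inflation ω f) {i i' a b : ℤ} (hag : Agree ω i i' a b)
    (ha : a ≤ 0) (hb : 0 ≤ b) :
    Agree ω (f i) (f i') (f (i + a) - f i) (f (i + b) - f i) := by
  intro t hat htb
  obtain ⟨j, hj, hj'⟩ := exists_le_lt_succ h.strictMono (f i + t)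
  obtain ⟨u, rfl⟩ : ∃ u, j = i + u := ⟨j - i, by lia⟩
  have hau : a < u + 1 := by
    have := h.strictMono.lt_iff_lt.mp (show f (i + a) < f (i + u + 1) by lia)
    lia
  have hub : u < b := by
    have := h.strictMono.lt_iff_lt.mp (show f (i + u) < f (i + b) by lia)
    lia
  have hletter := h.agree (hag u (by lia) hub) (f i + t - f (i + u)) (by lia) (by lia)
  have hsub : f (i + u) - f i = f (i' + u) - f i' := by
    rcases le_total 0 u with hu | hu
    · simpa using h.sub_eq hag ha hu hub.le
    · linarith [show f i - f (i + u) = f i' - f (i' + u) by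
        simpa using h.sub_eq hag (by lia) hu hb]
  rw [add_sub_cancel] at hletter
  rw [hletter]
  congr 1
  lia

lemma comp (hf : Inflation ω f) (hg : Inflation ω g) : Inflation ω (f ∘ g) where
  zero := by simp [hf.zero, hg.zero]
  lt_succ j := hf.strictMono (hg.lt_succ j)
  gap_eq {j j'} hj := by
    have hsub := hf.sub_eq (hg.agree hj) le_rfl (sub_nonneg.mpr (hg.lt_succ j).le) le_rfl
    rw [add_zero, add_zero, add_sub_cancel, hg.gap_eq hj, add_sub_cancel] at hsub
    exact hsub
  agree {j j'} hj := by
    have hag := hf.agree_image (hg.agree hj) le_rfl (sub_nonneg.mpr (hg.lt_succ j).le)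
    rwa [add_zero, sub_self, add_sub_cancel] at hag

lemma id (ω : ℤ → A) : Inflation ω id where
  zero := rfl
  lt_succ j := lt_add_one j
  gap_eq _ := by simp
  agree hj t ht0 ht1 := by
    obtain rfl : t = 0 := by simp only [id_eq] at ht1; lia
    simpa using hj

lemma iterate (hf : Inflation ω f) (k : ℕ) : Inflation ω f^[k] := by
  induction k with
  | zero => exact id ω
  | succ k ih => rw [Function.iterate_succ]; exact ih.comp hf

lemma two_pow_le_iterate (hf : Inflation ω f) (htwo : ∀ j, 2 ≤ f (j + 1) - f j) (k : ℕ) (j : ℤ) :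
    2 ^ k ≤ f^[k] (j + 1) - f^[k] j := by
  induction k with
  | zero => simp
  | succ k ih =>
    rw [Function.iterate_succ_apply', Function.iterate_succ_apply', pow_succ]
    linarith [mul_le_sub_of_le_gap htwo ((hf.iterate k).lt_succ j).le]

lemma le_iterate (hf : Inflation ω f) (htwo : ∀ j, 2 ≤ f (j + 1) - f j) (k : ℕ) (j : ℤ) :
    k ≤ f^[k] (j + 1) - f^[k] j :=
  le_trans (mod_cast Nat.lt_two_pow_self.le) (hf.two_pow_le_iterate htwo k j)

lemma exists_gap_le [Finite A] (hf : Inflation ω f) : ∃ c : ℕ, ∀ j, f (j + 1) - f j ≤ c := by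
  obtain ⟨e, he⟩ := (Function.factorsThrough_iff (g := fun j => f (j + 1) - f j) (f := ω)).mp
    fun _ _ => hf.gap_eq
  obtain ⟨c, hc⟩ := (Set.finite_range e).bddAbove
  exact ⟨c.toNat, fun j => ((congrFun he j).trans_le (hc ⟨ω j, rfl⟩)).trans c.self_le_toNat⟩

lemma gap_iterate_le_gap_iterate_succ (hf : Inflation ω f)
    (hletters : ∀ j j', ∃ i, f j ≤ i ∧ i < f (j + 1) ∧ ω i = ω j') (k : ℕ) (j j' : ℤ) :
    f^[k] (j' + 1) - f^[k] j' ≤ f^[k + 1] (j + 1) - f^[k + 1] j := by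
  obtain ⟨i, hji, hij, hletter⟩ := hletters j j'
  have hk := hf.iterate k
  rw [← hk.gap_eq hletter, Function.iterate_succ_apply, Function.iterate_succ_apply]
  exact sub_le_sub (hk.strictMono.monotone hij) (hk.strictMono.monotone hji)

lemma gap_iterate_succ_le (hf : Inflation ω f) {c : ℤ} (hc : ∀ j, f (j + 1) - f j ≤ c) (k : ℕ)
    (j : ℤ) : f^[k + 1] (j + 1) - f^[k + 1] j ≤ (f^[k] (j + 1) - f^[k] j) * c := by
  rw [Function.iterate_succ_apply', Function.iterate_succ_apply']
  exact sub_le_mul_of_gap_le hc ((hf.iterate k).lt_succ j).le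

lemma exists_iterate_gaps (hf : Inflation ω f) (htwo : ∀ j, 2 ≤ f (j + 1) - f j) {c : ℤ}
    (hc : ∀ j, f (j + 1) - f j ≤ c)
    (hletters : ∀ j j', ∃ i, f j ≤ i ∧ i < f (j + 1) ∧ ω i = ω j') {L : ℕ} (hL : 1 ≤ L) :
    ∃ h, Inflation ω h ∧ ∀ j, L ≤ h (j + 1) - h j ∧ h (j + 1) - h j ≤ L * c * c := by
  classical
  have hc0 : 1 ≤ c := by linarith [htwo 0, hc 0]
  have hlong : ∃ k : ℕ, ∀ j, (L : ℤ) ≤ f^[k] (j + 1) - f^[k] j := ⟨L, hf.le_iterate htwo L⟩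
  refine ⟨f^[Nat.find hlong], hf.iterate _, fun j => ⟨Nat.find_spec hlong j, ?_⟩⟩
  rcases hk : Nat.find hlong with _ | k
  · simp only [Function.iterate_zero, id_eq, add_sub_cancel_left]
    exact one_le_mul_of_one_le_of_one_le
      (one_le_mul_of_one_le_of_one_le (mod_cast hL) hc0) hc0
  · obtain ⟨j₀, hj₀⟩ : ∃ j₀, f^[k] (j₀ + 1) - f^[k] j₀ < L := by
      simpa using Nat.find_min hlong (hk ▸ Nat.lt_succ_self k)
    calc f^[k + 1] (j + 1) - f^[k + 1] j
        ≤ (f^[k] (j + 1) - f^[k] j) * c := hf.gap_iterate_succ_le hc k j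
      _ ≤ (f^[k + 1] (j₀ + 1) - f^[k + 1] j₀) * c := by
          gcongr ?_ * c; exact hf.gap_iterate_le_gap_iterate_succ hletters k j₀ j
      _ ≤ ((f^[k] (j₀ + 1) - f^[k] j₀) * c) * c := by
          gcongr ?_ * c; exact hf.gap_iterate_succ_le hc k j₀
      _ ≤ L * c * c := by gcongr

end Inflation

/-- Every factor of `ω` of length `L ≥ 1` has an occurrence starting in each interval of length
`C * L`. -/
def LinearlyRecurrent (ω : ℤ → A) (C : ℕ) : Prop :=
  ∀ L : ℕ, 1 ≤ L → ∀ i i₀ : ℤ, ∃ i', i₀ ≤ i' ∧ i' < i₀ + C * L ∧ Agree ω i i' 0 L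

/- A factor of length `L` lies in two consecutive blocks of an iterate of `f` whose blocks have
length comparable to `L`, and every pair of consecutive letters recurs within bounded distance. -/
lemma Inflation.exists_linearlyRecurrent [Finite A] {ω : ℤ → A} {f : ℤ → ℤ} (hf : Inflation ω f)
    (htwo : ∀ j, 2 ≤ f (j + 1) - f j) {D : ℕ}
    (hD : ∀ i i₀ : ℤ, ∃ i', i₀ ≤ i' ∧ i' < i₀ + D ∧ Agree ω i i' 0 2) :
    ∃ C, LinearlyRecurrent ω C := by
  have hfD := hf.iterate (D + 1)
  have hgapD : ∀ j, (D : ℤ) + 1 ≤ f^[D + 1] (j + 1) - f^[D + 1] j := fun j => by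
    exact_mod_cast hf.le_iterate htwo (D + 1) j
  obtain ⟨c, hc⟩ := hfD.exists_gap_le
  have hletters : ∀ j j', ∃ i, f^[D + 1] j ≤ i ∧ i < f^[D + 1] (j + 1) ∧ ω i = ω j' := by
    intro j j'
    obtain ⟨i, hi, hi', hag⟩ := hD j' (f^[D + 1] j)
    exact ⟨i, hi, by linarith [hgapD j], by simpa using (hag 0 le_rfl two_pos).symm⟩
  have hD1 : (1 : ℤ) ≤ D := by obtain ⟨i', hi, hi', -⟩ := hD 0 0; lia
  refine ⟨(D + 1) * (c * c), fun L hL i i₀ => ?_⟩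
  obtain ⟨h, hh, hgap⟩ := hfD.exists_iterate_gaps (fun j => by linarith [hgapD j]) hc hletters hL
  obtain ⟨j, hj, hj'⟩ := exists_le_lt_succ hh.strictMono i
  obtain ⟨j₀, hj₀, hj₀'⟩ := exists_le_lt_succ hh.strictMono i₀
  obtain ⟨j', hlow, hupp, hag⟩ := hD j (j₀ + 1)
  have hlong : (L : ℤ) ≤ h (j + 2) - h (j + 1) := by
    simpa only [add_assoc, one_add_one_eq_two] using (hgap (j + 1)).1
  have himage := (hh.agree_image hag le_rfl zero_le_two).add_right (i - h j)
  have hgapj := hh.gap_eq (show ω j = ω j' by simpa using hag 0 le_rfl two_pos)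
  have hj'low : h (j₀ + 1) ≤ h j' := hh.strictMono.monotone hlow
  have hj'upp : h (j' + 1) ≤ h (j₀ + (D + 1)) := hh.strictMono.monotone (by lia)
  have hbound : h (j₀ + (D + 1)) - h j₀ ≤ (D + 1) * (c * c) * L := by
    have := sub_le_mul_of_gap_le (fun j => (hgap j).2) (show j₀ ≤ j₀ + (D + 1) by lia)
    linarith
  refine ⟨h j' + (i - h j), by lia, by push_cast; linarith, ?_⟩
  rw [add_sub_cancel, add_zero, sub_self] at himage
  exact himage.mono (by lia) (by lia)

/-! ### Return words -/

/-- `e` enumerates increasingly the occurrences in `ω` of its central word `ω [-n, n)`, an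
occurrence being located by its centre. -/
structure OccurrenceEnum (ω : ℤ → A) (n : ℕ) (e : ℤ → ℤ) : Prop where
  strictMono : StrictMono e
  zero : e 0 = 0
  agree_iff : ∀ {i}, Agree ω i 0 (-n) n ↔ ∃ j, e j = i

namespace LinearlyRecurrent

variable {ω : ℤ → A} {C n : ℕ}

lemma exists_occurrence (hC : LinearlyRecurrent ω C) (hn : 1 ≤ n) (i : ℤ) :
    ∃ i', Agree ω i' 0 (-n) n ∧ i < i' ∧ i' ≤ i + 2 * C * n := by
  obtain ⟨i', hlow, hupp, hag⟩ := hC (2 * n) (by lia) (-n) (i + 1 - n)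
  have hcentral := (hag.add_right n).symm
  rw [neg_add_cancel] at hcentral
  push_cast at hupp
  exact ⟨i' + n, hcentral.mono (by lia) (by push_cast; lia), by lia, by linarith⟩

lemma exists_occurrenceEnum (hC : LinearlyRecurrent ω C) (hn : 1 ≤ n) :
    ∃ e, OccurrenceEnum ω n e := by
  obtain ⟨e, hmono, hzero, hrange⟩ := exists_enumeration
    (E := {i | Agree ω i 0 (-n) n}) (Agree.refl ω 0 (-n) n)
    (not_bddAbove_iff.mpr fun i => by
      obtain ⟨i', hocc, hlt, -⟩ := hC.exists_occurrence hn i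
      exact ⟨i', hocc, hlt⟩)
    (not_bddBelow_iff.mpr fun i => by
      obtain ⟨i', hocc, -, hle⟩ := hC.exists_occurrence hn (i - 2 * C * n - 1)
      exact ⟨i', hocc, by linarith⟩)
  exact ⟨e, hmono, hzero, fun {i} => (Set.ext_iff.mp hrange i).symm⟩

/- Two occurrences at a smaller distance `q` would make a window of length `2 * n` invariant under
translation by `q`, and this window contains all factors of length `q + 1`. -/
lemma lt_mul_sub (hC : LinearlyRecurrent ω C) (hω : ∀ q : ℤ, 0 < q → ¬Function.Periodic ω q)
    {i i' : ℤ} (hi : Agree ω i 0 (-n) n) (hi' : Agree ω i' 0 (-n) n) (hlt : i < i') :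
    n < (C + 1) * (i' - i) := by
  obtain ⟨q, rfl⟩ := Int.le.dest hlt.le
  by_contra! hle
  refine hω q (by lia) fun t => ?_
  obtain ⟨t', hlow, hupp, hag⟩ := hC (q + 1) (by lia) t (i - n)
  have hwindow : t' < i + n := by
    push_cast at hupp
    have hCq : (C : ℤ) ≤ C * q := le_mul_of_one_le_right (by lia) (by lia)
    linarith
  have hperiod := (hi.trans hi'.symm) (t' - i) (by lia) (by lia)
  rw [add_sub_cancel, add_right_comm, add_sub_cancel] at hperiod
  have hstart := hag 0 le_rfl (by lia)
  rw [add_zero, add_zero] at hstart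
  rw [hag q (by lia) (by lia), hstart, hperiod]

end LinearlyRecurrent

namespace OccurrenceEnum

variable {ω : ℤ → A} {n : ℕ} {e : ℤ → ℤ} {C : ℕ} {j j' a b : ℤ}

lemma agree (he : OccurrenceEnum ω n e) (j : ℤ) : Agree ω (e j) 0 (-n) n :=
  he.agree_iff.mpr ⟨j, rfl⟩

lemma lt_succ (he : OccurrenceEnum ω n e) (j : ℤ) : e j < e (j + 1) :=
  he.strictMono (lt_add_one j)

lemma gap_le (he : OccurrenceEnum ω n e) (hC : LinearlyRecurrent ω C) (hn : 1 ≤ n) (j : ℤ) :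
    e (j + 1) - e j ≤ 2 * C * n := by
  obtain ⟨i', hocc, hlt, hle⟩ := hC.exists_occurrence hn (e j)
  obtain ⟨j', rfl⟩ := he.agree_iff.mp hocc
  have hmono : e (j + 1) ≤ e j' := he.strictMono.monotone (he.strictMono.lt_iff_lt.mp hlt)
  linarith

lemma mul_le_mul_sub (he : OccurrenceEnum ω n e) (hC : LinearlyRecurrent ω C)
    (hω : ∀ q : ℤ, 0 < q → ¬Function.Periodic ω q) (hj : j ≤ j') :
    (j' - j) * n ≤ (C + 1) * (e j' - e j) := by
  have hgap : ∀ k, (n : ℤ) ≤ (C + 1) * e (k + 1) - (C + 1) * e k := fun k => by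
    linarith [hC.lt_mul_sub hω (he.agree k) (he.agree (k + 1)) (he.lt_succ k)]
  linarith [mul_le_sub_of_le_gap (f := fun k => (C + 1 : ℤ) * e k) hgap hj]

lemma exists_eq_of_agree (he : OccurrenceEnum ω n e) {i i' : ℤ} (h : Agree ω i i' a b)
    (ha : a + n ≤ e j - i) (hb : e j - i ≤ b - n) : ∃ k, e k = i' + (e j - i) := by
  have hag := h.add_right (e j - i)
  rw [add_sub_cancel] at hag
  exact he.agree_iff.mp ((hag.mono (by lia) (by lia)).symm.trans (he.agree j))

lemma gap_eq_of_agree (he : OccurrenceEnum ω n e) (h : Agree ω (e j) (e j') a b) (ha : a ≤ -n)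
    (hb : e (j + 1) - e j + n ≤ b) : e (j' + 1) - e j' = e (j + 1) - e j := by
  have hlt := he.lt_succ j
  have hlt' := he.lt_succ j'
  have gap_le_gap {j j' : ℤ} {k : ℤ} (hk : e k = e j' + (e (j + 1) - e j))
      (hlt : e j < e (j + 1)) : e (j' + 1) - e j' ≤ e (j + 1) - e j := by
    have hmono : e (j' + 1) ≤ e k :=
      he.strictMono.monotone (he.strictMono.lt_iff_lt.mp (by lia : e j' < e k))
    lia
  obtain ⟨k, hk⟩ := he.exists_eq_of_agree h (j := j + 1) (by lia) (by lia)
  have hle := gap_le_gap hk hlt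
  obtain ⟨k', hk'⟩ := he.exists_eq_of_agree h.symm (j := j' + 1) (by lia) (by lia)
  exact hle.antisymm (gap_le_gap hk' hlt')

lemma sub_eq_of_agree (he : OccurrenceEnum ω n e) (h : Agree ω (e j) (e j') a b) (ha : a ≤ -n)
    (k : ℕ) (hb : e (j + k) - e j + n ≤ b) : e (j' + k) - e j' = e (j + k) - e j := by
  induction k with
  | zero => simp
  | succ k ih =>
    push_cast at hb ⊢
    rw [← add_assoc] at hb ⊢
    rw [← add_assoc]
    have hlt := he.lt_succ (j + k)
    have hle : e j ≤ e (j + k) := he.strictMono.monotone (by lia)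
    have hsub := ih (by lia)
    have hag := h.add_right (e (j + k) - e j)
    rw [add_sub_cancel, ← hsub, add_sub_cancel, hsub] at hag
    have hgap := he.gap_eq_of_agree hag (by lia) (by lia)
    lia

lemma sub_eq_of_agree_left (he : OccurrenceEnum ω n e) (h : Agree ω (e j) (e j') a b)
    (hb : n ≤ b) (k : ℕ) (ha : a + n ≤ e (j - k) - e j) :
    e (j' - k) - e j' = e (j - k) - e j := by
  have hle : e (j - k) ≤ e j := he.strictMono.monotone (by lia)
  obtain ⟨j'', hj''⟩ := he.exists_eq_of_agree h ha (by lia)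
  have hag := h.add_right (e (j - k) - e j)
  rw [add_sub_cancel, ← hj''] at hag
  have hsub := he.sub_eq_of_agree hag (by lia) k (by rw [sub_add_cancel]; lia)
  rw [sub_add_cancel] at hsub
  have hk : j'' + k = j' := he.strictMono.injective (by lia)
  rw [← hk, add_sub_cancel_right]
  lia

end OccurrenceEnum

/-- The words separating the occurrences number `j` and `j + 1`, respectively `j'` and `j' + 1`, of
the central word of radius `n` coincide, together with the occurrences surrounding them. -/
def SameReturn (ω : ℤ → A) (n : ℕ) (e : ℤ → ℤ) (j j' : ℤ) : Prop :=
  e (j + 1) - e j = e (j' + 1) - e j' ∧ Agree ω (e j) (e j') (-n) (e (j + 1) - e j + n)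

section SameReturn

variable {ω : ℤ → A} {n C : ℕ} {e f F : ℤ → ℤ} {j j' j'' a b : ℤ}

lemma SameReturn.symm (h : SameReturn ω n e j j') : SameReturn ω n e j' j :=
  ⟨h.1.symm, h.1 ▸ h.2.symm⟩

lemma SameReturn.trans (h : SameReturn ω n e j j') (h' : SameReturn ω n e j' j'') :
    SameReturn ω n e j j'' :=
  ⟨h.1.trans h'.1, h.2.trans (h.1 ▸ h'.2)⟩

namespace OccurrenceEnum

lemma sameReturn_of_agree (he : OccurrenceEnum ω n e) (h : Agree ω (e j) (e j') a b)
    (ha : a ≤ -n) (hb : e (j + 1) - e j + n ≤ b) : SameReturn ω n e j j' :=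
  ⟨(he.gap_eq_of_agree h ha hb).symm, h.mono ha hb⟩

lemma sameReturn_add_of_agree (he : OccurrenceEnum ω n e) (h : Agree ω (e j) (e j') a b) {t : ℤ}
    (hsub : e (j' + t) - e j' = e (j + t) - e j) (ha : a + n ≤ e (j + t) - e j)
    (hb : e (j + t + 1) - e j + n ≤ b) : SameReturn ω n e (j + t) (j' + t) := by
  have hag := h.add_right (e (j + t) - e j)
  rw [add_sub_cancel, ← hsub, add_sub_cancel, hsub] at hag
  exact he.sameReturn_of_agree hag (by lia) (by lia)

lemma sameReturn_add_of_agree_of_gap_le (he : OccurrenceEnum ω n e) {G : ℕ}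
    (hG : ∀ j, e (j + 1) - e j ≤ G) {L : ℕ}
    (h : Agree ω (e j) (e j') (-(n + L * G)) (n + L * G)) {t : ℤ} (hLt : -L ≤ t) (htL : t < L) :
    SameReturn ω n e (j + t) (j' + t) := by
  have hlow : -(L * G : ℤ) ≤ e (j + t) - e j := by
    rcases le_total 0 t with ht | ht
    · have : e j ≤ e (j + t) := he.strictMono.monotone (by lia)
      nlinarith
    · have := sub_le_mul_of_gap_le hG (by lia : j + t ≤ j)
      nlinarith
  have hupp : e (j + t + 1) - e j ≤ L * G := by
    rcases le_total 0 (t + 1) with ht | ht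
    · have := sub_le_mul_of_gap_le hG (by lia : j ≤ j + t + 1)
      nlinarith
    · have : e (j + t + 1) ≤ e j := he.strictMono.monotone (by lia)
      nlinarith
  have hlt := he.lt_succ (j + t)
  refine he.sameReturn_add_of_agree h ?_ (by linarith) (by linarith)
  obtain ⟨k, rfl | rfl⟩ := t.eq_nat_or_neg
  · exact he.sub_eq_of_agree h (by nlinarith) k (by linarith)
  · exact he.sub_eq_of_agree_left h (by nlinarith) k
      (by rw [← sub_eq_add_neg] at hlow; linarith)

lemma agree_of_sameReturn (he : OccurrenceEnum ω n e) {L : ℕ}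
    (h : ∀ t : ℤ, -L ≤ t → t < L → SameReturn ω n e (j + t) (j' + t)) :
    Agree ω (e j) (e j') (-L) L := by
  intro i hLi hiL
  obtain ⟨k, hk, hk'⟩ := exists_le_lt_succ he.strictMono (e j + i)
  obtain ⟨t, rfl⟩ : ∃ t, k = j + t := ⟨k - j, by lia⟩
  have htL : t < L := by
    by_contra! hle
    linarith [sub_le_sub_of_strictMono he.strictMono (by lia : j ≤ j + t)]
  have hLt : -L ≤ t := by
    by_contra! hle
    linarith [sub_le_sub_of_strictMono he.strictMono (by lia : j + t + 1 ≤ j)]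
  have hsub : e (j + t) - e j = e (j' + t) - e j' := by
    have htele {u v : ℤ} := sub_eq_sub_of_gap_eq (u := u) (v := v) fun s hLs hsL => (h s hLs hsL).1
    rcases le_total 0 t with ht | ht
    · simpa using htele (by lia) ht htL.le
    · have := htele hLt ht (by lia)
      simp only [add_zero] at this
      linarith
  have hletter := (h t hLt htL).2 (e j + i - e (j + t)) (by lia) (by lia)
  rwa [add_sub_cancel, show e (j' + t) + (e j + i - e (j + t)) = e j' + i by lia] at hletter

lemma exists_agree_imp_agree {m : ℕ} {e' : ℤ → ℤ} (he : OccurrenceEnum ω n e)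
    (he' : OccurrenceEnum ω m e') {G : ℕ} (hG : ∀ j, e (j + 1) - e j ≤ G)
    (h : ∀ j j', SameReturn ω n e j j' → SameReturn ω m e' j j') (L : ℕ) :
    ∃ L' : ℕ, ∀ j j', Agree ω (e j) (e j') (-L') L' → Agree ω (e' j) (e' j') (-L) L := by
  refine ⟨n + L * G, fun j j' hj => he'.agree_of_sameReturn fun t hLt htL => h _ _ ?_⟩
  push_cast at hj
  exact he.sameReturn_add_of_agree_of_gap_le hG hj hLt htL

lemma exists_nat_sameReturn (he : OccurrenceEnum ω n e) (hC : LinearlyRecurrent ω C)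
    (hω : ∀ q : ℤ, 0 < q → ¬Function.Periodic ω q) (hn : 1 ≤ n) (j : ℤ) :
    ∃ k : ℕ, k ≤ (C + 1) * (C * (2 * C + 2) + 1) ∧ SameReturn ω n e k j := by
  obtain ⟨i', hlow, hupp, hag⟩ := hC ((2 * C + 2) * n) (by nlinarith) (e j - n) 0
  have hgap := he.gap_le hC hn j
  have hlt := he.lt_succ j
  have hcentred := hag.add_right n
  rw [sub_add_cancel, zero_sub] at hcentred
  push_cast at hcentred hupp
  obtain ⟨k, hk⟩ := he.exists_eq_of_agree (j := j) hcentred (by lia) (by nlinarith)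
  rw [sub_self, add_zero] at hk
  rw [← hk] at hcentred
  lift k to ℕ using he.strictMono.le_iff_le.mp (by rw [he.zero]; lia)
  refine ⟨k, ?_, (he.sameReturn_of_agree hcentred le_rfl (by linarith)).symm⟩
  have hkn := he.mul_le_mul_sub hC hω (j := 0) (j' := k) (by lia)
  rw [he.zero, hk, sub_zero, sub_zero] at hkn
  have hmul : (k : ℤ) * n ≤ ((C + 1) * (C * (2 * C + 2) + 1)) * n := by
    refine hkn.trans ?_
    rw [mul_assoc]
    gcongr
    linarith
  exact_mod_cast le_of_mul_le_mul_right hmul (by lia)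

lemma exists_index_map (he : OccurrenceEnum ω n e) (hf : Inflation ω f) :
    ∃ F : ℤ → ℤ, ∀ j, e (F j) = f (e j) := by
  refine Classical.skolem.mp fun j => he.agree_iff.mp ?_
  have hag := hf.agree_image (he.agree j) (by lia) (by lia)
  rw [hf.zero] at hag
  exact hag.mono
    (by linarith [sub_le_sub_of_strictMono hf.strictMono (by lia : e j + -n ≤ e j)])
    (by linarith [sub_le_sub_of_strictMono hf.strictMono (by lia : e j ≤ e j + n)])

lemma index_strictMono (he : OccurrenceEnum ω n e) (hf : Inflation ω f)
    (hF : ∀ j, e (F j) = f (e j)) : StrictMono F := fun j j' hj => by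
  rw [← he.strictMono.lt_iff_lt, hF, hF]
  exact hf.strictMono (he.strictMono hj)

lemma index_gap_le (he : OccurrenceEnum ω n e) (hf : Inflation ω f)
    (hF : ∀ j, e (F j) = f (e j)) (hC : LinearlyRecurrent ω C) {c : ℕ}
    (hc : ∀ j, f (j + 1) - f j ≤ c) (hω : ∀ q : ℤ, 0 < q → ¬Function.Periodic ω q) (hn : 1 ≤ n)
    (j : ℤ) : F (j + 1) - F j ≤ (C + 1) * (2 * C * c) := by
  have hlt := he.index_strictMono hf hF (lt_add_one j)
  refine le_of_mul_le_mul_right ?_ (by lia : (0 : ℤ) < n)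
  calc (F (j + 1) - F j) * n
      ≤ (C + 1) * (f (e (j + 1)) - f (e j)) := by
        rw [← hF, ← hF]; exact he.mul_le_mul_sub hC hω hlt.le
    _ ≤ (C + 1) * ((e (j + 1) - e j) * c) := by
        gcongr; exact sub_le_mul_of_gap_le hc (he.lt_succ j).le
    _ ≤ (C + 1) * ((2 * C * n) * c) := by gcongr; exact he.gap_le hC hn j
    _ = (C + 1) * (2 * C * c) * n := by ring

end OccurrenceEnum

lemma SameReturn.image (he : OccurrenceEnum ω n e) (hf : Inflation ω f)
    (hF : ∀ j, e (F j) = f (e j)) (h : SameReturn ω n e j j') :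
    F (j + 1) - F j = F (j' + 1) - F j' ∧
      ∀ t : ℕ, t < F (j + 1) - F j → SameReturn ω n e (F j + t) (F j' + t) := by
  have hlt := he.lt_succ j
  have hag : Agree ω (e (F j)) (e (F j')) (-n) (e (F (j + 1)) - e (F j) + n) := by
    rw [hF, hF, hF]
    refine (hf.agree_image h.2 (by lia) (by lia)).mono ?_ ?_
    · linarith [sub_le_sub_of_strictMono hf.strictMono (by lia : e j + -n ≤ e j)]
    · linarith [sub_le_sub_of_strictMono hf.strictMono
        (by lia : e (j + 1) ≤ e j + (e (j + 1) - e j + n))]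
  have hsub (t : ℕ) (ht : F j + t ≤ F (j + 1)) :
      e (F j' + t) - e (F j') = e (F j + t) - e (F j) :=
    he.sub_eq_of_agree hag le_rfl t (by linarith [he.strictMono.monotone ht])
  constructor
  · obtain ⟨k, hk⟩ := Int.le.dest (he.index_strictMono hf hF (lt_add_one j)).le
    have himage := hf.sub_eq h.2 (t := 0) (u := e (j + 1) - e j) (by lia) (by lia) (by lia)
    rw [add_sub_cancel, h.1, add_sub_cancel, add_zero, add_zero, ← hF, ← hF, ← hF, ← hF] at himage
    have hk' : F j' + k = F (j' + 1) := he.strictMono.injective (by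
      have := hsub k hk.le
      rw [hk] at this
      linarith)
    lia
  · intro t ht
    have hle : e (F j) ≤ e (F j + t) := he.strictMono.monotone (by lia)
    have hle' : e (F j + t + 1) ≤ e (F (j + 1)) := he.strictMono.monotone (by lia)
    exact he.sameReturn_add_of_agree hag (hsub t (by lia)) (by lia) (by lia)

end SameReturn

/-! ### Crossings -/

section InflationUniqueness

variable {β : Type*} {D D' : ℤ → β} {F F' : ℤ → ℤ}

lemma eq_at_of_inflation (hF : StrictMono F) {j : ℤ}
    (hblock : ∀ k, D k = D' k → ∀ t : ℕ, t < F (k + 1) - F k → D (F k + t) = D' (F' k + t))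
    (hindex : ∀ k, F k ≤ j → j < F (k + 1) → D k = D' k ∧ F k = F' k) : D j = D' j := by
  obtain ⟨k, hkj, hjk⟩ := exists_le_lt_succ hF j
  obtain ⟨hDk, hFk⟩ := hindex k hkj hjk
  obtain ⟨t, rfl⟩ := Int.le.dest hkj
  rw [hblock k hDk t (by lia), hFk]

lemma eq_natCast_of_inflation (hF : StrictMono F) (hF0 : F 0 = 0) (hF'0 : F' 0 = 0)
    (hF1 : 2 ≤ F 1) (hD0 : D 0 = D' 0)
    (hgap : ∀ j, D j = D' j → F (j + 1) - F j = F' (j + 1) - F' j)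
    (hblock : ∀ j, D j = D' j → ∀ t : ℕ, t < F (j + 1) - F j → D (F j + t) = D' (F' j + t))
    (n : ℕ) : D n = D' n ∧ F n = F' n := by
  induction n using Nat.strong_induction_on with
  | _ n ih =>
    rcases n with _ | n
    · exact ⟨hD0, hF0.trans hF'0.symm⟩
    · refine ⟨eq_at_of_inflation hF hblock fun k hkn hnk => ?_, ?_⟩
      · have hk0 : 0 < k + 1 := hF.lt_iff_lt.mp (by lia)
        have hkn' : k < n + 1 := by
          by_contra! hle
          have := sub_le_sub_of_strictMono hF (by lia : 1 ≤ k)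
          lia
        lift k to ℕ using by lia
        exact ih k (by lia)
      · obtain ⟨hDn, hFn⟩ := ih n (lt_add_one n)
        have := hgap n hDn
        push_cast
        lia

lemma eq_neg_one_sub_natCast_of_inflation (hF : StrictMono F) (hF0 : F 0 = 0) (hF'0 : F' 0 = 0)
    (hFneg : F (-1) ≤ -2) (hDneg : D (-1) = D' (-1))
    (hgap : ∀ j, D j = D' j → F (j + 1) - F j = F' (j + 1) - F' j)
    (hblock : ∀ j, D j = D' j → ∀ t : ℕ, t < F (j + 1) - F j → D (F j + t) = D' (F' j + t))
    (n : ℕ) : D (-1 - n) = D' (-1 - n) ∧ F (-1 - n) = F' (-1 - n) := by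
  induction n using Nat.strong_induction_on with
  | _ n ih =>
    have hletter : D (-1 - n) = D' (-1 - n) := by
      rcases n with _ | n
      · simpa using hDneg
      · refine eq_at_of_inflation hF hblock fun k hkn hnk => ?_
        have hk0 : k < 0 := hF.lt_iff_lt.mp (by lia)
        have hkn' : -1 - (n : ℤ) ≤ k := by
          by_contra! hlt
          have := sub_le_sub_of_strictMono hF (by lia : k + 1 ≤ -1)
          lia
        obtain ⟨m, hm⟩ := Int.le.dest (by lia : k ≤ -1)
        obtain rfl : k = -1 - m := by lia
        exact ih m (by lia)
    have hnext : F (-1 - n + 1) = F' (-1 - n + 1) := by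
      rcases n with _ | n
      · simp [hF0, hF'0]
      · simpa [sub_add_eq_sub_sub] using (ih n (lt_add_one n)).2
    exact ⟨hletter, by have := hgap _ hletter; lia⟩

/- The position of a letter lies farther from the centre than the index of the block containing it,
except at the two central positions, so letters and cuts are determined from the centre outwards. -/
lemma eq_of_inflation_eq (hF : StrictMono F)
    (hF0 : F 0 = 0) (hF'0 : F' 0 = 0) (hF1 : 2 ≤ F 1) (hFneg : F (-1) ≤ -2)
    (hD0 : D 0 = D' 0) (hDneg : D (-1) = D' (-1))
    (hgap : ∀ j, D j = D' j → F (j + 1) - F j = F' (j + 1) - F' j)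
    (hblock : ∀ j, D j = D' j → ∀ t : ℕ, t < F (j + 1) - F j → D (F j + t) = D' (F' j + t)) :
    D = D' := by
  funext j
  rcases le_or_gt 0 j with hj | hj
  · lift j to ℕ using hj
    exact (eq_natCast_of_inflation hF hF0 hF'0 hF1 hD0 hgap hblock j).1
  · obtain ⟨m, hm⟩ := Int.le.dest (by lia : j ≤ -1)
    obtain rfl : j = -1 - m := by lia
    exact (eq_neg_one_sub_natCast_of_inflation hF hF0 hF'0 hFneg hDneg hgap hblock m).1

end InflationUniqueness

/-- The first point `≥ y` on the forward orbit of `x` under a map `s` with `i < s i` for all `i`.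
The second alternative in the condition is there only to make the recursion terminate for an
arbitrary `s`. -/
def firstPoint (s : ℤ → ℤ) (x y : ℤ) : ℤ :=
  if y ≤ x ∨ s x ≤ x then x else firstPoint s (s x) y
termination_by (y - x).toNat
decreasing_by lia

section FirstPoint

variable {s : ℤ → ℤ} {x y z : ℤ}

lemma firstPoint_of_le (h : y ≤ x) : firstPoint s x y = x := by
  rw [firstPoint, if_pos (Or.inl h)]

lemma firstPoint_of_lt (hs : ∀ i, i < s i) (h : x < y) :
    firstPoint s x y = firstPoint s (s x) y := by
  rw [firstPoint, if_neg (not_or.mpr ⟨h.not_ge, (hs x).not_ge⟩)]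

lemma orbit_induction (hs : ∀ i, i < s i) (y : ℤ) {P : ℤ → Prop} (hle : ∀ x, y ≤ x → P x)
    (hlt : ∀ x, x < y → P (s x) → P x) (x : ℤ) : P x := by
  induction h : (y - x).toNat using Nat.strong_induction_on generalizing x with
  | _ n ih =>
    rcases le_or_gt y x with hyx | hxy
    · exact hle x hyx
    · exact hlt x hxy (ih _ (by have := hs x; lia) (s x) rfl)

lemma le_firstPoint (hs : ∀ i, i < s i) : y ≤ firstPoint s x y := by
  induction x using orbit_induction hs y with
  | hle x h => rwa [firstPoint_of_le h]
  | hlt x h ih => rwa [firstPoint_of_lt hs h]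

lemma firstPoint_lt (hs : ∀ i, i < s i) {M : ℕ} (hM : ∀ i, s i ≤ i + M) (hx : x < y + M) :
    firstPoint s x y < y + M := by
  induction x using orbit_induction hs y with
  | hle x h => rwa [firstPoint_of_le h]
  | hlt x h ih =>
    rw [firstPoint_of_lt hs h]
    exact ih (by have := hM x; lia)

lemma firstPoint_firstPoint (hs : ∀ i, i < s i) (hyz : y ≤ z) :
    firstPoint s (firstPoint s x y) z = firstPoint s x z := by
  induction x using orbit_induction hs y with
  | hle x h => rw [firstPoint_of_le h]
  | hlt x h ih => rw [firstPoint_of_lt hs h, ih, ← firstPoint_of_lt hs (h.trans_le hyz)]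

lemma firstPoint_add_add (hs : ∀ i, i < s i) {d : ℤ}
    (hd : ∀ i, x ≤ i → i < y → s (i + d) = s i + d) :
    firstPoint s (x + d) (y + d) = firstPoint s x y + d := by
  induction x using orbit_induction hs y with
  | hle x h => rw [firstPoint_of_le h, firstPoint_of_le (by lia)]
  | hlt x h ih =>
    rw [firstPoint_of_lt hs h, firstPoint_of_lt hs (by lia), hd x le_rfl h]
    exact ih fun i hxi hiy => hd i ((hs x).le.trans hxi) hiy

lemma firstPoint_iterate (hs : ∀ i, i < s i) (k : ℕ) : firstPoint s x (s^[k] x) = s^[k] x := by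
  induction k generalizing x with
  | zero => exact firstPoint_of_le le_rfl
  | succ k ih =>
    have hle : s x ≤ s^[k] (s x) := Function.id_le_iterate_of_id_le (fun i => (hs i).le) k (s x)
    rw [Function.iterate_succ_apply, firstPoint_of_lt hs ((hs x).trans_le hle), ih]

lemma exists_iterate_eq_firstPoint (hs : ∀ i, i < s i) : ∃ k : ℕ, s^[k] x = firstPoint s x y := by
  induction x using orbit_induction hs y with
  | hle x h => exact ⟨0, (firstPoint_of_le h).symm⟩
  | hlt x h ih =>
    obtain ⟨k, hk⟩ := ih
    exact ⟨k + 1, by rw [firstPoint_of_lt hs h, ← hk, Function.iterate_succ_apply]⟩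

lemma firstPoint_eq_iff (hs : ∀ i, i < s i) : firstPoint s x y = y ↔ ∃ k : ℕ, s^[k] x = y := by
  refine ⟨fun h => h ▸ exists_iterate_eq_firstPoint hs, ?_⟩
  rintro ⟨k, rfl⟩
  exact firstPoint_iterate hs k

end FirstPoint

/-- The orbit of `e j + a` under `s` enters `[e (j + 1), ∞)` at the point
`e (j + 1) + crossing s e j a`. -/
def crossing (s e : ℤ → ℤ) (j a : ℤ) : ℤ := firstPoint s (e j + a) (e (j + 1)) - e (j + 1)

section Crossing

variable {s e e' : ℤ → ℤ} {M : ℕ}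

lemma crossing_nonneg (hs : ∀ i, i < s i) (j a : ℤ) : 0 ≤ crossing s e j a :=
  sub_nonneg.mpr (le_firstPoint hs)

lemma crossing_lt (hs : ∀ i, i < s i) (hM : ∀ i, s i ≤ i + M) (he : StrictMono e) (j : ℤ) {a : ℤ}
    (ha : a < M) : crossing s e j a < M := by
  have hlt := he (lt_add_one j)
  exact sub_lt_iff_lt_add'.mpr (firstPoint_lt hs hM (by lia))

lemma firstPoint_sub_eq_of_crossing_eq (hs : ∀ i, i < s i) (hM : ∀ i, s i ≤ i + M)
    (he : StrictMono e) (he' : StrictMono e')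
    (hcross : ∀ j a : ℤ, 0 ≤ a → a < M → crossing s e j a = crossing s e' j a) (j : ℤ) (k : ℕ)
    {a : ℤ} (ha0 : 0 ≤ a) (haM : a < M) :
    firstPoint s (e j + a) (e (j + k)) - e (j + k) =
      firstPoint s (e' j + a) (e' (j + k)) - e' (j + k) := by
  induction k with
  | zero => simp [firstPoint_of_le, ha0]
  | succ k ih =>
    have hle : e j ≤ e (j + k) := he.monotone (by lia)
    have hnext := hcross (j + k) (firstPoint s (e j + a) (e (j + k)) - e (j + k))
      (sub_nonneg.mpr (le_firstPoint hs))
      (sub_lt_iff_lt_add'.mpr (firstPoint_lt hs hM (by lia)))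
    unfold crossing at hnext
    rw [add_sub_cancel, firstPoint_firstPoint hs (he (lt_add_one _)).le, ih, add_sub_cancel,
      firstPoint_firstPoint hs (he' (lt_add_one _)).le] at hnext
    push_cast
    rwa [← add_assoc]

lemma exists_iterate_eq_iff_of_crossing_eq (hs : ∀ i, i < s i) (hM : ∀ i, s i ≤ i + M)
    (he : StrictMono e) (he' : StrictMono e')
    (hcross : ∀ j a : ℤ, 0 ≤ a → a < M → crossing s e j a = crossing s e' j a) {j j' : ℤ}
    (hj : j ≤ j') :
    (∃ k : ℕ, s^[k] (e j) = e j') ↔ ∃ k : ℕ, s^[k] (e' j) = e' j' := by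
  obtain ⟨k, rfl⟩ := Int.le.dest hj
  have hM0 : (0 : ℤ) < M := by linarith [hs 0, hM 0]
  have hsub := firstPoint_sub_eq_of_crossing_eq hs hM he he' hcross j k le_rfl hM0
  rw [add_zero, add_zero] at hsub
  rw [← firstPoint_eq_iff hs, ← firstPoint_eq_iff hs, ← sub_eq_zero, hsub, sub_eq_zero]

lemma SameReturn.crossing_eq {ω : ℤ → A} {n K : ℕ} {j j' : ℤ} (h : SameReturn ω n e j j')
    (hs : ∀ i, i < s i) (hlocal : ∀ i i', Agree ω i i' (-K) K → s i - i = s i' - i') (hK : K ≤ n)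
    {a : ℤ} (ha : 0 ≤ a) : crossing s e j a = crossing s e j' a := by
  have hshift := firstPoint_add_add (x := e j + a) (y := e (j + 1)) (d := e j' - e j) hs (by
    intro i hlow hupp
    have hag := (h.2.add_right (i - e j)).mono (a' := -K) (b' := K) (by lia) (by lia)
    rw [add_sub_cancel, add_sub_left_comm] at hag
    linarith [hlocal _ _ hag])
  unfold crossing
  rw [show e j' + a = e j + a + (e j' - e j) by ring,
    show e (j' + 1) = e (j + 1) + (e j' - e j) by linarith [h.1], hshift, add_sub_add_right_eq_sub]

end Crossing

/-! ### Finite descriptions -/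

/-- The index of the first return with index in `ℕ` having the same return word as the return `j`.
Junk value `0` if there is none. -/
noncomputable def label (ω : ℤ → A) (n : ℕ) (e : ℤ → ℤ) (j : ℤ) : ℕ :=
  sInf {k : ℕ | SameReturn ω n e k j}

lemma SameReturn.label_eq {ω : ℤ → A} {n : ℕ} {e : ℤ → ℤ} {j j' : ℤ}
    (h : SameReturn ω n e j j') : label ω n e j = label ω n e j' :=
  congrArg sInf (Set.ext fun _ => ⟨fun hk => hk.trans h, fun hk => hk.trans h.symm⟩)

/-- The return substitution of `ω` at radius `n`: the inflation `f` acts on the indices of the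
enumeration `e` as `F`, there are at most `N` return words, and the image of each of them
consists of fewer than `B` return words. -/
structure BoundedReturns (ω : ℤ → A) (n N B : ℕ) (e f F : ℤ → ℤ) : Prop where
  enum : OccurrenceEnum ω n e
  index : ∀ j, e (F j) = f (e j)
  label_lt : ∀ j, label ω n e j < N
  sameReturn_label : ∀ j, SameReturn ω n e (label ω n e j) j
  gap_lt : ∀ j, (F (j + 1) - F j).toNat < B

lemma LinearlyRecurrent.exists_boundedReturns {ω : ℤ → A} {C c n : ℕ} {f : ℤ → ℤ}
    (hC : LinearlyRecurrent ω C) (hf : Inflation ω f) (hc : ∀ j, f (j + 1) - f j ≤ c)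
    (hω : ∀ q : ℤ, 0 < q → ¬Function.Periodic ω q) (hn : 1 ≤ n) :
    ∃ e F, BoundedReturns ω n ((C + 1) * (C * (2 * C + 2) + 1) + 1) ((C + 1) * (2 * C * c) + 1)
      e f F := by
  obtain ⟨e, he⟩ := hC.exists_occurrenceEnum hn
  obtain ⟨F, hF⟩ := he.exists_index_map hf
  refine ⟨e, F, he, hF, fun j => ?_, fun j => ?_, fun j => ?_⟩
  · obtain ⟨k, hk, hkj⟩ := he.exists_nat_sameReturn hC hω hn j
    exact Nat.lt_succ_of_le ((Nat.sInf_le hkj).trans hk)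
  · obtain ⟨k, -, hkj⟩ := he.exists_nat_sameReturn hC hω hn j
    exact Nat.sInf_mem (s := {k : ℕ | SameReturn ω n e k j}) ⟨k, hkj⟩
  · have := he.index_gap_le hf hF hC hc hω hn j
    exact Nat.lt_succ_of_le (Int.toNat_le.mpr (by exact_mod_cast this))

/-- Finite descriptions of return substitutions with crossings: the central two letters, the lengths
and the letters of the images of the return words, and the crossings of the return words. -/
abbrev ReturnData (N B M : ℕ) : Type :=
  Fin N × Fin N × (Fin N → Fin B) × (Fin N → Fin B → Fin N) × (Fin N → Fin M → Fin M)

namespace BoundedReturns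

variable {ω : ℤ → A} {n m N B M : ℕ} {e e' f F F' s : ℤ → ℤ}

lemma label_eq_iff (h : BoundedReturns ω n N B e f F) {j j' : ℤ} :
    label ω n e j = label ω n e j' ↔ SameReturn ω n e j j' := by
  refine ⟨fun hlabel => ?_, SameReturn.label_eq⟩
  have hj := h.sameReturn_label j
  rw [hlabel] at hj
  exact hj.symm.trans (h.sameReturn_label j')

lemma index_strictMono (h : BoundedReturns ω n N B e f F) (hf : Inflation ω f) : StrictMono F :=
  h.enum.index_strictMono hf h.index

lemma index_zero (h : BoundedReturns ω n N B e f F) (hf : Inflation ω f) : F 0 = 0 :=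
  h.enum.strictMono.injective (by rw [h.index, h.enum.zero, hf.zero])

lemma two_le_index_one (h : BoundedReturns ω n N B e f F) (hf : Inflation ω f)
    (htwo : ∀ j, 2 ≤ f (j + 1) - f j) : 2 ≤ F 1 := by
  have hpos : e 0 < e 1 := h.enum.strictMono one_pos
  have hdouble := mul_le_sub_of_le_gap htwo hpos.le
  rw [h.enum.zero] at hpos hdouble
  have hlt : 1 < F 1 := h.enum.strictMono.lt_iff_lt.mp (by rw [h.index]; linarith [hf.zero])
  lia

lemma index_neg_one_le (h : BoundedReturns ω n N B e f F) (hf : Inflation ω f)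
    (htwo : ∀ j, 2 ≤ f (j + 1) - f j) : F (-1) ≤ -2 := by
  have hneg : e (-1) < e 0 := h.enum.strictMono (by simp)
  have hdouble := mul_le_sub_of_le_gap htwo hneg.le
  rw [h.enum.zero] at hneg hdouble
  have hlt : F (-1) < -1 := h.enum.strictMono.lt_iff_lt.mp (by rw [h.index]; linarith [hf.zero])
  lia

lemma gap_label (h : BoundedReturns ω n N B e f F) (hf : Inflation ω f) (j : ℤ) :
    F (label ω n e j + 1) - F (label ω n e j) = F (j + 1) - F j :=
  ((h.sameReturn_label j).image h.enum hf h.index).1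

lemma label_index_label_add (h : BoundedReturns ω n N B e f F) (hf : Inflation ω f) (j : ℤ) (t : ℕ)
    (ht : t < F (j + 1) - F j) :
    label ω n e (F (label ω n e j) + t) = label ω n e (F j + t) :=
  (((h.sameReturn_label j).image h.enum hf h.index).2 t (by rwa [h.gap_label hf])).label_eq

/-- The finite description of the return substitution at radius `n` together with the crossings of
`s`. -/
noncomputable def returnData (h : BoundedReturns ω n N B e f F) (hs : ∀ i, i < s i)
    (hM : ∀ i, s i ≤ i + M) : ReturnData N B M :=
  (⟨label ω n e 0, h.label_lt 0⟩, ⟨label ω n e (-1), h.label_lt (-1)⟩,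
    fun k => ⟨(F (k + 1) - F k).toNat, h.gap_lt k⟩,
    fun k t => ⟨label ω n e (F k + t), h.label_lt _⟩,
    fun k a => ⟨(crossing s e k a).toNat,
      (Int.toNat_lt (crossing_nonneg hs _ _)).mpr
        (crossing_lt hs hM h.enum.strictMono _ (by exact_mod_cast a.isLt))⟩)

lemma label_eq_of_returnData_eq (h : BoundedReturns ω n N B e f F)
    (h' : BoundedReturns ω m N B e' f F') (hf : Inflation ω f)
    (htwo : ∀ j, 2 ≤ f (j + 1) - f j) (hs : ∀ i, i < s i) (hM : ∀ i, s i ≤ i + M)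
    (hdata : h.returnData hs hM = h'.returnData hs hM) : label ω n e = label ω m e' := by
  simp only [returnData, Prod.mk.injEq, funext_iff, Fin.mk.injEq] at hdata
  obtain ⟨hzero, hneg, hgap, hblock, -⟩ := hdata
  have gap_eq (j : ℤ) (hj : label ω n e j = label ω m e' j) :
      F (j + 1) - F j = F' (j + 1) - F' j := by
    have hnat := hgap ⟨_, h.label_lt j⟩
    have hmono := h.index_strictMono hf (lt_add_one j)
    have hmono' := h'.index_strictMono hf (lt_add_one j)
    dsimp only at hnat
    rw [h.gap_label hf, hj, h'.gap_label hf] at hnat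
    lia
  refine eq_of_inflation_eq (h.index_strictMono hf) (h.index_zero hf) (h'.index_zero hf)
    (h.two_le_index_one hf htwo) (h.index_neg_one_le hf htwo) hzero hneg gap_eq fun j hj t ht => ?_
  have hB := h.gap_lt j
  rw [← h.label_index_label_add hf j t ht, ← h'.label_index_label_add hf j t (gap_eq j hj ▸ ht),
    ← hj]
  exact hblock ⟨_, h.label_lt j⟩ ⟨t, by lia⟩

lemma crossing_eq_of_returnData_eq {K : ℕ} (h : BoundedReturns ω n N B e f F)
    (h' : BoundedReturns ω m N B e' f F') (hlabel : label ω n e = label ω m e')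
    (hs : ∀ i, i < s i) (hM : ∀ i, s i ≤ i + M)
    (hlocal : ∀ i i', Agree ω i i' (-K) K → s i - i = s i' - i') (hKn : K ≤ n) (hKm : K ≤ m)
    (hdata : h.returnData hs hM = h'.returnData hs hM) (j a : ℤ) (ha : 0 ≤ a) (haM : a < M) :
    crossing s e j a = crossing s e' j a := by
  simp only [returnData, Prod.mk.injEq, funext_iff, Fin.mk.injEq] at hdata
  lift a to ℕ using ha
  have hnat := hdata.2.2.2.2 ⟨_, h.label_lt j⟩ ⟨a, by exact_mod_cast haM⟩
  have hj := (h.sameReturn_label j).crossing_eq hs hlocal hKn (Int.natCast_nonneg a)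
  have hj' := (h'.sameReturn_label j).crossing_eq hs hlocal hKm (Int.natCast_nonneg a)
  have hnonneg : 0 ≤ crossing s e j a := crossing_nonneg hs _ _
  have hnonneg' : 0 ≤ crossing s e' j a := crossing_nonneg hs _ _
  dsimp only at hnat
  rw [hj, hlabel, hj'] at hnat
  lia

end BoundedReturns

/- Infinitely many radii share the same finite description, which determines the sequence of return
words. -/
lemma exists_equivalent_returns {ω : ℤ → A} {f s : ℤ → ℤ} {C M K : ℕ}
    (hf : Inflation ω f) (htwo : ∀ j, 2 ≤ f (j + 1) - f j)
    (hgaps : ∃ c : ℕ, ∀ j, f (j + 1) - f j ≤ c) (hC : LinearlyRecurrent ω C)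
    (hω : ∀ q : ℤ, 0 < q → ¬Function.Periodic ω q) (hs : ∀ i, i < s i) (hM : ∀ i, s i ≤ i + M)
    (hlocal : ∀ i i', Agree ω i i' (-K) K → s i - i = s i' - i') :
    ∃ (n m G G' : ℕ) (e e' : ℤ → ℤ), OccurrenceEnum ω n e ∧ OccurrenceEnum ω m e' ∧
      (∀ j j', SameReturn ω n e j j' ↔ SameReturn ω m e' j j') ∧
      (∀ j j', j ≤ j' → ((∃ k : ℕ, s^[k] (e j) = e j') ↔ ∃ k : ℕ, s^[k] (e' j) = e' j')) ∧
      (∀ j, e (j + 1) - e j ≤ G) ∧ (∀ j, e' (j + 1) - e' j ≤ G') ∧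
      ∀ j, M * G < e' (j + 1) - e' j := by
  obtain ⟨c, hc⟩ := hgaps
  choose e F h using fun n : ℕ =>
    hC.exists_boundedReturns (n := n + K + 1) hf hc hω (Nat.le_add_left 1 (n + K))
  obtain ⟨d, hd⟩ := Finite.exists_infinite_fiber fun n => (h n).returnData hs hM
  have hinf := Set.infinite_coe_iff.mp hd
  obtain ⟨n, hn⟩ := hinf.nonempty
  obtain ⟨m, hm, hlt⟩ := hinf.exists_gt ((C + 1) * (M * (2 * C * (n + K + 1))))
  have hdata := hn.trans hm.symm
  have hlabel := (h n).label_eq_of_returnData_eq (h m) hf htwo hs hM hdata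
  refine ⟨n + K + 1, m + K + 1, 2 * C * (n + K + 1), 2 * C * (m + K + 1), e n, e m,
    (h n).enum, (h m).enum, fun j j' => ?_, fun j j' hj => ?_, fun j => ?_, fun j => ?_,
    fun j => ?_⟩
  · rw [← (h n).label_eq_iff, ← (h m).label_eq_iff, hlabel]
  · exact exists_iterate_eq_iff_of_crossing_eq hs hM (h n).enum.strictMono (h m).enum.strictMono
      ((h n).crossing_eq_of_returnData_eq (h m) hlabel hs hM hlocal (by lia) (by lia) hdata) hj
  · exact_mod_cast (h n).enum.gap_le hC (by lia) j
  · exact_mod_cast (h m).enum.gap_le hC (by lia) j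
  · have hgap := hC.lt_mul_sub hω ((h m).enum.agree j) ((h m).enum.agree (j + 1))
      ((h m).enum.lt_succ j)
    have hlt : ((C : ℤ) + 1) * (M * (2 * C * (n + K + 1))) < m := by exact_mod_cast hlt
    push_cast at hgap ⊢
    exact lt_of_mul_lt_mul_left (by linarith [hlt] : ((C : ℤ) + 1) * _ < (C + 1) * _) (by lia)

/-! ### First returns and towers -/

section FirstReturn

variable {X : Type*}

/-- `k` is the return time `r(x)` of `x` to `V` under `S`, that is, the first positive time at which
the orbit of `x` enters `V`. -/
def IsFirstReturn (S : Equiv.Perm X) (V : Set X) (x : X) (k : ℕ) : Prop :=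
  1 ≤ k ∧ (S ^ k) x ∈ V ∧ ∀ n : ℕ, 1 ≤ n → n < k → (S ^ n) x ∉ V

/-- `S` is topologically conjugate to its first-return map on a nonempty proper clopen set. -/
def IsSelfInduced [TopologicalSpace X] (S : Equiv.Perm X) : Prop :=
  ∃ U : Set X, IsClopen U ∧ U.Nonempty ∧ U ≠ Set.univ ∧
    ∃ (φ : X ≃ₜ U) (r : U → ℕ), (∀ y : U, IsFirstReturn S U y (r y)) ∧
      ∀ x : X, (φ (S x) : X) = (S ^ r (φ x)) (φ x)

/-- `g` maps the first return of `b` to `V` to the first return of `g b` to `V'`, and the latter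
takes more time. If this holds for every `b`, then `g` conjugates the first-return maps. -/
def LengthensReturnAt (S : Equiv.Perm X) {V V' : Set X} (g : V → V') (b : V) : Prop :=
  ∃ (c : V) (r r' : ℕ), IsFirstReturn S V b r ∧ (S ^ r) (b : X) = c ∧
    IsFirstReturn S V' (g b) r' ∧ (S ^ r') (g b : X) = g c ∧ r < r'

variable {S : Equiv.Perm X} {V : Set X} {x b : X} {k n r : ℕ}

lemma IsFirstReturn.pos (h : IsFirstReturn S V x r) : 1 ≤ r := h.1

lemma IsFirstReturn.mem (h : IsFirstReturn S V x r) : (S ^ r) x ∈ V := h.2.1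

lemma IsFirstReturn.notMem (h : IsFirstReturn S V x r) (hn : 1 ≤ n) (hnr : n < r) :
    (S ^ n) x ∉ V := h.2.2 n hn hnr

lemma IsFirstReturn.le (h : IsFirstReturn S V x r) (hn : 1 ≤ n) (hmem : (S ^ n) x ∈ V) : r ≤ n :=
  not_lt.mp fun hnr => h.notMem hn hnr hmem

/-- The level of `x` in the Kakutani tower over `V`, that is, the time elapsed since the last visit
of `x` to `V`. Junk value `0` if there is none. -/
noncomputable def height (S : Equiv.Perm X) (V : Set X) (x : X) : ℕ :=
  sInf {n | (S ^ n).symm x ∈ V}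

lemma symm_pow_apply_pow_apply (hkn : k ≤ n) : (S ^ k).symm ((S ^ n) x) = (S ^ (n - k)) x := by
  rw [Equiv.symm_apply_eq, ← Equiv.Perm.mul_apply, ← pow_add, Nat.add_sub_cancel' hkn]

lemma symm_pow_height_mem (h : ∃ n, (S ^ n).symm x ∈ V) : (S ^ height S V x).symm x ∈ V :=
  Nat.sInf_mem h

lemma height_eq_iff (h : ∃ n, (S ^ n).symm x ∈ V) :
    height S V x = k ↔ (S ^ k).symm x ∈ V ∧ ∀ i < k, (S ^ i).symm x ∉ V := by
  classical
  rw [height, Nat.sInf_def (s := {n | (S ^ n).symm x ∈ V}) h, Nat.find_eq_iff]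
  rfl

lemma IsFirstReturn.height_pow_apply (h : IsFirstReturn S V b r) (hb : b ∈ V) (hnr : n < r) :
    height S V ((S ^ n) b) = n := by
  have hbase : (S ^ n).symm ((S ^ n) b) ∈ V := by rwa [Equiv.symm_apply_apply]
  refine (height_eq_iff ⟨n, hbase⟩).mpr ⟨hbase, fun i hi => ?_⟩
  rw [symm_pow_apply_pow_apply hi.le]
  exact h.notMem (by lia) (by lia)

lemma IsFirstReturn.height_lt (h : IsFirstReturn S V b r) (hb : b ∈ V)
    (heq : height S V ((S ^ n) b) = n) : n < r := by
  by_contra! hle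
  have hbase : (S ^ n).symm ((S ^ n) b) ∈ V := by rwa [Equiv.symm_apply_apply]
  refine ((height_eq_iff ⟨n, hbase⟩).mp heq).2 (n - r) (by have := h.pos; lia) ?_
  rw [symm_pow_apply_pow_apply (Nat.sub_le n r), Nat.sub_sub_self hle]
  exact h.mem

end FirstReturn

section Tower

variable {X : Type*} {S : Equiv.Perm X} {V V' : Set X} {g : V → V'}

/-- The point of `V` over which `x` lies in the Kakutani tower. -/
noncomputable def towerBase (hV : ∀ x, ∃ n, (S ^ n).symm x ∈ V) (x : X) : V :=
  ⟨(S ^ height S V x).symm x, symm_pow_height_mem (hV x)⟩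

/-- The map from the Kakutani tower over `V` to the one over `V'` that acts on the bases as `g` and
preserves levels. -/
noncomputable def towerMap (g : V → V') (hV : ∀ x, ∃ n, (S ^ n).symm x ∈ V) (x : X) : X :=
  (S ^ height S V x) (g (towerBase hV x))

variable (hV : ∀ x, ∃ n, (S ^ n).symm x ∈ V)

lemma pow_height_towerBase (x : X) : (S ^ height S V x) (towerBase hV x : X) = x :=
  Equiv.apply_symm_apply _ _

lemma towerMap_pow_apply {b : V} {n : ℕ} (h : height S V ((S ^ n) (b : X)) = n) :
    towerMap g hV ((S ^ n) b) = (S ^ n) (g b) := by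
  have hbase : towerBase hV ((S ^ n) b) = b :=
    Subtype.ext (by simp only [towerBase, h, Equiv.symm_apply_apply])
  rw [towerMap, hbase, h]

lemma range_towerMap : Set.range (towerMap g hV) =
    ⋃ n, (fun b : V => (S ^ n) (g b : X)) '' {b : V | height S V ((S ^ n) (b : X)) = n} := by
  ext y
  simp only [Set.mem_range, Set.mem_iUnion, Set.mem_image, Set.mem_ofPred_eq]
  constructor
  · rintro ⟨x, rfl⟩
    exact ⟨height S V x, towerBase hV x, by rw [pow_height_towerBase], rfl⟩
  · rintro ⟨n, b, hb, rfl⟩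
    exact ⟨_, towerMap_pow_apply hV hb⟩

section LengthensReturns

variable (hg : ∀ b, LengthensReturnAt S g b)
include hg

lemma exists_height_lt (x : X) :
    ∃ (c : V) (r r' : ℕ), height S V x < r ∧ IsFirstReturn S V (towerBase hV x) r ∧
      (S ^ r) (towerBase hV x : X) = c ∧ IsFirstReturn S V' (g (towerBase hV x)) r' ∧
      (S ^ r') (g (towerBase hV x) : X) = g c ∧ r < r' := by
  obtain ⟨c, r, r', hr, hc, hr', hc', hlt⟩ := hg (towerBase hV x)
  exact ⟨c, r, r', hr.height_lt (towerBase hV x).2 (by rw [pow_height_towerBase]), hr, hc, hr', hc',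
    hlt⟩

lemma height_towerMap (x : X) : height S V' (towerMap g hV x) = height S V x := by
  obtain ⟨c, r, r', hlt, -, -, hr', -, hrr'⟩ := exists_height_lt hV hg x
  exact hr'.height_pow_apply (g _).2 (hlt.trans hrr')

lemma injective_towerMap (hinj : Function.Injective g) : Function.Injective (towerMap g hV) := by
  intro x y hxy
  have hheight : height S V x = height S V y := by
    rw [← height_towerMap hV hg, hxy, height_towerMap hV hg]
  have hbase : towerBase hV x = towerBase hV y := by
    unfold towerMap at hxy
    rw [hheight] at hxy
    exact hinj (Subtype.ext ((S ^ _).injective hxy))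
  rw [← pow_height_towerBase hV x, hheight, hbase, pow_height_towerBase]

lemma lt_of_mem_range_towerMap (hinj : Function.Injective g) {b : V} {n r r' : ℕ}
    (hr : IsFirstReturn S V b r) (hr' : IsFirstReturn S V' (g b) r') (hn : n < r')
    (hmem : (S ^ n) (g b : X) ∈ Set.range (towerMap g hV)) : n < r := by
  obtain ⟨x, hx⟩ := hmem
  have hheight : height S V x = n := by
    rw [← height_towerMap hV hg, hx, hr'.height_pow_apply (g b).2 hn]
  have hbase : towerBase hV x = b := by
    rw [towerMap, hheight] at hx
    exact hinj (Subtype.ext ((S ^ n).injective hx))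
  refine hr.height_lt b.2 ?_
  rw [← hbase, ← hheight, pow_height_towerBase]

lemma exists_isFirstReturn_range (hinj : Function.Injective g) (x : X) :
    ∃ k, IsFirstReturn S (Set.range (towerMap g hV)) (towerMap g hV x) k ∧
      towerMap g hV (S x) = (S ^ k) (towerMap g hV x) := by
  obtain ⟨c, r, r', hlt, hr, hc, hr', hc', hrr'⟩ := exists_height_lt hV hg x
  have hpow (k : ℕ) :
      (S ^ k) (towerMap g hV x) = (S ^ (k + height S V x)) (g (towerBase hV x)) := by
    rw [towerMap, ← Equiv.Perm.mul_apply, ← pow_add]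
  have hSx : S x = (S ^ (height S V x + 1)) (towerBase hV x : X) := by
    rw [pow_succ', Equiv.Perm.mul_apply, pow_height_towerBase]
  rcases (Nat.succ_le_of_lt hlt).lt_or_eq with hbelow | htop
  · have hstep : towerMap g hV (S x) = (S ^ 1) (towerMap g hV x) := by
      rw [hSx, towerMap_pow_apply hV (hr.height_pow_apply (towerBase hV x).2 hbelow), hpow,
        add_comm]
    exact ⟨1, ⟨le_rfl, ⟨S x, hstep⟩, fun n hn hn1 => absurd hn hn1.not_ge⟩, hstep⟩
  · have hstep : towerMap g hV (S x) = (S ^ (r' - height S V x)) (towerMap g hV x) := by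
      have hheight : height S V ((S ^ 0) (c : X)) = 0 :=
        Nat.eq_zero_of_le_zero (Nat.sInf_le c.2)
      rw [hpow, Nat.sub_add_cancel (hlt.trans hrr').le, hc', hSx, ← Nat.succ_eq_add_one, htop, hc]
      exact towerMap_pow_apply hV hheight
    refine ⟨r' - height S V x, ⟨by lia, ⟨S x, hstep⟩, fun n hn hnr hmem => ?_⟩, hstep⟩
    rw [hpow] at hmem
    have := lt_of_mem_range_towerMap hV hg hinj hr hr' (by lia) hmem
    lia

end LengthensReturns

section Topology

variable [TopologicalSpace X] [CompactSpace X] [T2Space X]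

lemma isHomeomorph_pow (hS : Continuous S) (n : ℕ) : IsHomeomorph (S ^ n) :=
  isHomeomorph_iff_continuous_bijective.mpr
    ⟨by rw [Equiv.Perm.coe_pow]; exact hS.iterate n, (S ^ n).bijective⟩

include hV

lemma isOpen_height_eq (hS : Continuous S) (hclopen : IsClopen V) (k : ℕ) :
    IsOpen {x | height S V x = k} := by
  have hpreimage (i : ℕ) : IsClopen {x | (S ^ i).symm x ∈ V} := by
    have himage : {x | (S ^ i).symm x ∈ V} = (S ^ i) '' V := ((S ^ i).image_eq_preimage_symm V).symm
    rw [himage]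
    have hi := isHomeomorph_pow hS i
    exact ⟨hi.isClosedMap _ hclopen.isClosed, hi.isOpenMap _ hclopen.isOpen⟩
  simp only [height_eq_iff (hV _), Set.ofPred_and, Set.ofPred_forall]
  exact (hpreimage k).isOpen.inter
    ((Set.finite_lt_nat k).isOpen_biInter fun i _ => (hpreimage i).compl.isOpen)

lemma isOpen_height_pow_apply_eq (hS : Continuous S) (hclopen : IsClopen V) (n : ℕ) :
    IsOpen {b : V | height S V ((S ^ n) (b : X)) = n} :=
  (isOpen_height_eq hV hS hclopen n).preimage
    ((isHomeomorph_pow hS n).continuous.comp continuous_subtype_val)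

lemma continuous_towerMap (hS : Continuous S) (hclopen : IsClopen V) (hg : Continuous g) :
    Continuous (towerMap g hV) := by
  refine continuous_iff_continuousAt.mpr fun x => ?_
  have hlevel : Topology.IsOpenEmbedding fun b : V => (S ^ height S V x) (b : X) :=
    (isHomeomorph_pow hS _).isOpenEmbedding.comp hclopen.isOpen.isOpenEmbedding_subtypeVal
  rw [← pow_height_towerBase hV x, ← hlevel.continuousAt_iff]
  have hcont : Continuous fun b : V => (S ^ height S V x) (g b : X) :=
    (isHomeomorph_pow hS _).continuous.comp (continuous_subtype_val.comp hg)
  refine hcont.continuousAt.congr (Filter.eventuallyEq_of_mem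
    ((isOpen_height_pow_apply_eq hV hS hclopen _).mem_nhds ?_) fun b hb =>
      (towerMap_pow_apply hV hb).symm)
  exact congrArg (height S V) (pow_height_towerBase hV x)

lemma isOpen_range_towerMap (hS : Continuous S) (hclopen : IsClopen V) (hopen : IsOpen V')
    (hg : IsOpenMap g) : IsOpen (Set.range (towerMap g hV)) := by
  rw [range_towerMap]
  exact isOpen_iUnion fun n => ((isHomeomorph_pow hS n).isOpenMap.comp
    (hopen.isOpenMap_subtype_val.comp hg)) _ (isOpen_height_pow_apply_eq hV hS hclopen n)

theorem isSelfInduced_of_lengthensReturns [Nonempty X] (hS : Continuous S) (hclopen : IsClopen V)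
    (hopen : IsOpen V') (g : V ≃ₜ V') (hg : ∀ b, LengthensReturnAt S g b) : IsSelfInduced S := by
  have hcont := continuous_towerMap hV hS hclopen g.continuous
  choose r hr hstep using exists_isFirstReturn_range hV hg g.injective
  let φ : X ≃ₜ Set.range (towerMap g hV) := Continuous.homeoOfEquivCompactToT2
    (f := Equiv.ofInjective _ (injective_towerMap hV hg g.injective)) (hcont.subtype_mk _)
  refine ⟨Set.range (towerMap g hV), ⟨(isCompact_range hcont).isClosed,
    isOpen_range_towerMap hV hS hclopen hopen g.isOpenMap⟩, Set.range_nonempty _, fun huniv => ?_,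
    φ, fun y => r (φ.symm y), fun y => ?_, fun x => ?_⟩
  · obtain ⟨x⟩ := ‹Nonempty X›
    obtain ⟨-, s, s', -, hs, -, hs', -, hlt⟩ := exists_height_lt hV hg x
    exact lt_irrefl s
      (lt_of_mem_range_towerMap hV hg g.injective hs hs' hlt (huniv ▸ Set.mem_univ _))
  · obtain ⟨x, rfl⟩ := φ.surjective y
    simp only [Homeomorph.symm_apply_apply]
    exact hr x
  · simp only [Homeomorph.symm_apply_apply]
    exact hstep x

end Topology

end Tower

/-! ### Conjugacies from dense orbits -/

section DenseReturns

variable {X : Type*} {S : Equiv.Perm X} {V V' : Set X}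

lemma IsFirstReturn.unique {x : X} {r r' : ℕ} (h : IsFirstReturn S V x r)
    (h' : IsFirstReturn S V x r') : r = r' :=
  le_antisymm (h.le h'.pos h'.mem) (h'.le h.pos h.mem)

variable [TopologicalSpace X] [CompactSpace X] [T2Space X]

lemma isOpen_isFirstReturn (hS : Continuous S) (hV : IsClopen V) (r : ℕ) :
    IsOpen {x | IsFirstReturn S V x r} := by
  have hmem (n : ℕ) : IsClopen {x | (S ^ n) x ∈ V} :=
    hV.preimage (isHomeomorph_pow hS n).continuous
  have hinter : {x | IsFirstReturn S V x r} =
      {_x | 1 ≤ r} ∩ {x | (S ^ r) x ∈ V} ∩ ⋂ n ∈ Set.Ico 1 r, {x | (S ^ n) x ∈ V}ᶜ := by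
    ext x
    simp only [IsFirstReturn, Set.mem_ofPred_eq, Set.mem_inter_iff, Set.mem_iInter, Set.mem_Ico,
      Set.mem_compl_iff, and_imp, and_assoc]
  rw [hinter]
  exact (isOpen_const.inter (hmem r).isOpen).inter
    ((Set.finite_Ico 1 r).isOpen_biInter fun n _ => (hmem n).compl.isOpen)

lemma lengthensReturns_of_dense (hS : Continuous S) (hV : IsClopen V) (hV' : IsClopen V')
    {g : V → V'} (hg : Continuous g) {D : Set V} (hD : Dense D)
    (hreturn : ∀ b : V, ∃ r, IsFirstReturn S V b r)
    (hreturn' : ∀ b : V', ∃ r, IsFirstReturn S V' b r)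
    (hlengthen : ∀ b ∈ D, LengthensReturnAt S g b) (b : V) : LengthensReturnAt S g b := by
  have : CompactSpace V := isCompact_iff_compactSpace.mp hV.isClosed.isCompact
  obtain ⟨r, hr⟩ := hreturn b
  obtain ⟨r', hr'⟩ := hreturn' (g b)
  have hgval : Continuous fun c : V => (g c : X) := continuous_subtype_val.comp hg
  have hopen : IsOpen {c : V | IsFirstReturn S V c r ∧ IsFirstReturn S V' (g c) r'} :=
    ((isOpen_isFirstReturn hS hV r).preimage continuous_subtype_val).inter
      ((isOpen_isFirstReturn hS hV' r').preimage hgval)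
  have hgraph : IsClosed (Set.range fun c : V => ((c : X), (g c : X))) :=
    (isCompact_range (continuous_subtype_val.prodMk hgval)).isClosed
  have hclosed : IsClosed {c : V | r < r' ∧ ((S ^ r) (c : X), (S ^ r') (g c : X)) ∈
      Set.range fun c : V => ((c : X), (g c : X))} :=
    isClosed_const.inter (hgraph.preimage
      (((isHomeomorph_pow hS r).continuous.comp continuous_subtype_val).prodMk
        ((isHomeomorph_pow hS r').continuous.comp hgval)))
  obtain ⟨hlt, c, hc⟩ : b ∈ {c : V | r < r' ∧ _} := by
    refine closure_minimal ?_ hclosed (hD.open_subset_closure_inter hopen ⟨hr, hr'⟩)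
    rintro d ⟨⟨hd, hd'⟩, hdD⟩
    obtain ⟨c, s, s', hs, hc, hs', hc', hlt⟩ := hlengthen d hdD
    obtain rfl := hs.unique hd
    obtain rfl := hs'.unique hd'
    exact ⟨hlt, c, by rw [hc, hc']⟩
  simp only [Prod.mk.injEq] at hc
  exact ⟨c, r, r', hr, hc.1.symm, hr', hc.2.symm, hlt⟩

end DenseReturns

section Windows

open Filter Uniformity

lemma exists_homeomorph_of_comap_uniformity_eq {ι Y Z : Type*} [UniformSpace Y] [CompleteSpace Y]
    [T0Space Y] [UniformSpace Z] [CompleteSpace Z] [T0Space Z] {y : ι → Y} {z : ι → Z}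
    (hy : DenseRange y) (hz : DenseRange z)
    (h : comap (Prod.map y y) (𝓤 Y) = comap (Prod.map z z) (𝓤 Z)) :
    ∃ g : Y ≃ₜ Z, ∀ i, g (y i) = z i := by
  let _ : UniformSpace ι := .comap y inferInstance
  let completionY : AbstractCompletion ι := ⟨Y, y, inferInstance, inferInstance, inferInstance,
    ⟨rfl⟩, hy⟩
  let completionZ : AbstractCompletion ι := ⟨Z, z, inferInstance, inferInstance, inferInstance,
    ⟨h.symm⟩, hz⟩
  exact ⟨(completionY.compareEquiv completionZ).toHomeomorph, completionY.compare_coe completionZ⟩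

variable [UniformSpace A] [DiscreteUniformity A] {X : Set (ℤ → A)}

lemma hasBasis_uniformity_eqOn : (𝓤 (ℤ → A)).HasBasis (fun _ : ℕ => True)
    fun L => {q | Set.EqOn q.1 q.2 (Set.Ico (-L) L)} := by
  simp only [Pi.uniformity, DiscreteUniformity.eq_principal_setRelId, comap_principal]
  refine (hasBasis_iInf_principal_finite _).to_hasBasis (fun I hI => ?_) fun L _ => ?_
  · refine ⟨hI.toFinset.sup Int.natAbs + 1, trivial, fun q hq => Set.mem_iInter₂.mpr fun t ht => ?_⟩
    have := Finset.le_sup (f := Int.natAbs) (hI.mem_toFinset.mpr ht)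
    exact hq ⟨by lia, by lia⟩
  · exact ⟨Set.Ico (-L) L, Set.finite_Ico _ _, fun q hq t ht => Set.mem_iInter₂.mp hq t ht⟩

lemma hasBasis_comap_uniformity_eqOn {ι : Type*} (y : ι → ℤ → A) :
    (comap (Prod.map y y) (𝓤 (ℤ → A))).HasBasis (fun _ : ℕ => True)
      fun L => {q | Set.EqOn (y q.1) (y q.2) (Set.Ico (-L) L)} :=
  hasBasis_uniformity_eqOn.comap _

lemma exists_eqOn_imp_eq [CompactSpace X] {p : X → ℕ} (hp : Continuous p) :
    ∃ K : ℕ, ∀ x y : X, Set.EqOn (x : ℤ → A) y (Set.Ico (-K) K) → p x = p y := by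
  have hunif := CompactSpace.uniformContinuous_of_continuous hp
  have hmem : {q : X × X | p q.1 = p q.2} ∈ 𝓤 X :=
    hunif (DiscreteUniformity.relId_mem_uniformity ℕ)
  rw [uniformity_subtype] at hmem
  obtain ⟨K, -, hK⟩ := (hasBasis_comap_uniformity_eqOn Subtype.val).mem_iff.mp hmem
  exact ⟨K, fun x y h => @hK (x, y) h⟩

lemma exists_homeomorph_of_eqOn [CompactSpace X] {V V' : Set X} (hV : IsClosed V)
    (hV' : IsClosed V') {ι : Type*} {y : ι → V} {z : ι → V'} (hy : DenseRange y)
    (hz : DenseRange z)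
    (hyz : ∀ L : ℕ, ∃ L' : ℕ, ∀ i j, Set.EqOn ((y i : X) : ℤ → A) (y j : X) (Set.Ico (-L') L') →
      Set.EqOn ((z i : X) : ℤ → A) (z j : X) (Set.Ico (-L) L))
    (hzy : ∀ L : ℕ, ∃ L' : ℕ, ∀ i j, Set.EqOn ((z i : X) : ℤ → A) (z j : X) (Set.Ico (-L') L') →
      Set.EqOn ((y i : X) : ℤ → A) (y j : X) (Set.Ico (-L) L)) :
    ∃ g : V ≃ₜ V', ∀ i, g (y i) = z i := by
  have : CompactSpace V := isCompact_iff_compactSpace.mp hV.isCompact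
  have : CompactSpace V' := isCompact_iff_compactSpace.mp hV'.isCompact
  refine exists_homeomorph_of_comap_uniformity_eq hy hz ?_
  simp only [uniformity_subtype, comap_comap]
  refine (hasBasis_comap_uniformity_eqOn fun i => ((y i : X) : ℤ → A)).ext
    (hasBasis_comap_uniformity_eqOn fun i => ((z i : X) : ℤ → A)) (fun L _ => ?_) fun L _ => ?_
  · obtain ⟨L', hL'⟩ := hzy L
    exact ⟨L', trivial, fun q hq => hL' _ _ hq⟩
  · obtain ⟨L', hL'⟩ := hyz L
    exact ⟨L', trivial, fun q hq => hL' _ _ hq⟩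

end Windows

/-! ### Speedups of minimal systems -/

section Minimal

variable {X : Type*} [TopologicalSpace X] [CompactSpace X] [T2Space X] {S : Equiv.Perm X}
  {V : Set X}

lemma continuous_zpow (hS : Continuous S) (k : ℤ) : Continuous (S ^ k : Equiv.Perm X) := by
  cases k with
  | ofNat n => exact (isHomeomorph_pow hS n).continuous
  | negSucc n =>
    rw [zpow_negSucc]
    exact (S ^ (n + 1)).continuous_symm_iff.mpr (isHomeomorph_pow hS _).isOpenMap

lemma exists_zpow_mem (hS : Continuous S) (hmin : ∀ x, Dense (Set.range fun n : ℤ => (S ^ n) x))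
    (hV : IsOpen V) (hne : V.Nonempty) :
    ∃ I : ℕ, ∀ (i : ℤ) (x : X), ∃ k, i ≤ k ∧ k ≤ i + I ∧ (S ^ k) x ∈ V := by
  obtain ⟨K, hK⟩ := isCompact_univ.elim_finite_subcover (fun k : ℤ => (S ^ k) ⁻¹' V)
    (fun k => hV.preimage (continuous_zpow hS k)) fun x _ => by
      obtain ⟨_, ⟨k, rfl⟩, hk⟩ := (hmin x).exists_mem_open hV hne
      exact Set.mem_iUnion.mpr ⟨k, hk⟩
  refine ⟨2 * K.sup Int.natAbs, fun i x => ?_⟩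
  obtain ⟨k, hkK, hk⟩ := Set.mem_iUnion₂.mp (hK (Set.mem_univ ((S ^ (i + K.sup Int.natAbs)) x)))
  have hle : k.natAbs ≤ K.sup Int.natAbs := Finset.le_sup hkK
  refine ⟨k + (i + K.sup Int.natAbs), by lia, by push_cast; lia, ?_⟩
  rwa [zpow_add, Equiv.Perm.mul_apply]

lemma exists_isFirstReturn (hS : Continuous S)
    (hmin : ∀ x, Dense (Set.range fun n : ℤ => (S ^ n) x)) (hV : IsOpen V) (hne : V.Nonempty)
    (x : X) : ∃ r, IsFirstReturn S V x r := by
  classical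
  obtain ⟨I, hI⟩ := exists_zpow_mem hS hmin hV hne
  obtain ⟨k, hk, -, hmem⟩ := hI 1 x
  lift k to ℕ using by lia
  have hex : ∃ k : ℕ, 1 ≤ k ∧ (S ^ k) x ∈ V := ⟨k, by lia, by rwa [zpow_natCast] at hmem⟩
  exact ⟨Nat.find hex, (Nat.find_spec hex).1, (Nat.find_spec hex).2,
    fun n hn hlt hn' => Nat.find_min hex hlt ⟨hn, hn'⟩⟩

lemma exists_symm_pow_mem (hS : Continuous S)
    (hmin : ∀ x, Dense (Set.range fun n : ℤ => (S ^ n) x)) (hV : IsOpen V) (hne : V.Nonempty)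
    (x : X) : ∃ n : ℕ, (S ^ n).symm x ∈ V := by
  obtain ⟨I, hI⟩ := exists_zpow_mem hS hmin hV hne
  obtain ⟨k, -, hk, hmem⟩ := hI (-I) x
  obtain ⟨n, rfl⟩ := Int.exists_eq_neg_ofNat (by lia : k ≤ 0)
  exact ⟨n, by rwa [zpow_neg, zpow_natCast] at hmem⟩

lemma exists_bound_recurrence {β : Type*} (hS : Continuous S)
    (hmin : ∀ x, Dense (Set.range fun n : ℤ => (S ^ n) x)) {g : X → β} (hg : IsLocallyConstant g) :
    ∃ D : ℕ, ∀ x y, ∃ k : ℕ, k < D ∧ g ((S ^ k) x) = g y := by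
  choose I hI using fun y => exists_zpow_mem hS hmin (hg.isOpen_fiber (g y)) ⟨y, rfl⟩
  obtain ⟨F, hF⟩ := isCompact_univ.elim_finite_subcover (fun y => {z | g z = g y})
    (fun y => hg.isOpen_fiber _) fun y _ => Set.mem_iUnion.mpr ⟨y, rfl⟩
  refine ⟨F.sup I + 1, fun x y => ?_⟩
  obtain ⟨z, hzF, hyz⟩ := Set.mem_iUnion₂.mp (hF (Set.mem_univ y))
  obtain ⟨k, hk, hkI, hmem⟩ := hI z 0 x
  have hle : I z ≤ F.sup I := Finset.le_sup hzF
  lift k to ℕ using hk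
  rw [zpow_natCast] at hmem
  exact ⟨k, by lia, hmem.trans hyz.symm⟩

end Minimal

section Orbit

variable {X : Type*} {T S : Equiv.Perm X} {p : X → ℕ}

/-- The action of a speedup on the exponents along the `T`-orbit of `x`. -/
def orbitStep (T : Equiv.Perm X) (p : X → ℕ) (x : X) (i : ℤ) : ℤ :=
  i + p ((T ^ i) x)

lemma pow_zpow_apply (hSp : ∀ x, S x = (T ^ p x) x) (x : X) (c : ℕ) (i : ℤ) :
    (S ^ c) ((T ^ i) x) = (T ^ (orbitStep T p x)^[c] i) x := by
  induction c generalizing i with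
  | zero => rfl
  | succ c ih =>
    rw [pow_succ, Equiv.Perm.mul_apply, hSp, Function.iterate_succ_apply, ← ih, orbitStep,
      add_comm i, zpow_add, Equiv.Perm.mul_apply, zpow_natCast]

lemma exists_zpow_eq_zpow (hSp : ∀ x, S x = (T ^ p x) x) (x : X) (n : ℤ) :
    ∃ k : ℤ, (T ^ k) x = (S ^ n) x := by
  have hnat (y : X) (n : ℕ) : ∃ k : ℤ, (T ^ k) y = (S ^ n) y :=
    ⟨_, (pow_zpow_apply hSp y n 0).symm⟩
  cases n with
  | ofNat n => exact hnat x n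
  | negSucc n =>
    obtain ⟨k, hk⟩ := hnat ((S ^ Int.negSucc n) x) (n + 1)
    refine ⟨-k, ?_⟩
    rw [zpow_neg, Equiv.Perm.inv_eq_iff_eq, hk, zpow_negSucc, ← Equiv.Perm.mul_apply,
      mul_inv_cancel, Equiv.Perm.one_apply]

variable [TopologicalSpace X]

lemma dense_zpow_of_speedup (hSp : ∀ x, S x = (T ^ p x) x) {x : X}
    (hdense : Dense (Set.range fun n : ℤ => (S ^ n) x)) :
    Dense (Set.range fun n : ℤ => (T ^ n) x) :=
  hdense.mono (Set.range_subset_iff.mpr fun n => exists_zpow_eq_zpow hSp x n)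

/- The fibres of `p` are closed, as `p x = c` amounts to `S x = T ^ c x`, and finite in number. -/
lemma continuous_of_speedup [T2Space X] (hT : Continuous T) (hS : Continuous S)
    (haper : ∀ x, ∀ n : ℕ, 0 < n → (T ^ n) x ≠ x) (hSp : ∀ x, S x = (T ^ p x) x) {M : ℕ}
    (hM : ∀ x, p x ≤ M) : Continuous p := by
  have hinj (x : X) : Function.Injective fun n : ℕ => (T ^ n) x := by
    refine Function.Injective.of_lt_imp_ne fun a b hab h => haper x (b - a) (by lia) ?_
    apply (T ^ a).injective
    rw [← Equiv.Perm.mul_apply, ← pow_add, Nat.add_sub_cancel' hab.le]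
    exact h.symm
  have hfibre (c : ℕ) : p ⁻¹' {c} = {x | S x = (T ^ c) x} := by
    ext x
    rw [Set.mem_ofPred_eq, hSp, (hinj x).eq_iff]
    rfl
  have hclosed (c : ℕ) : IsClosed (p ⁻¹' {c}) := by
    rw [hfibre]
    exact isClosed_eq hS (by rw [Equiv.Perm.coe_pow]; exact hT.iterate c)
  refine continuous_iff_isClosed.mpr fun s _ => ?_
  have hunion : p ⁻¹' s = ⋃ c ∈ s ∩ Set.Iic M, p ⁻¹' {c} := by
    ext x
    simp [hM x]
  rw [hunion]
  exact ((Set.finite_Iic M).inter_of_right s).isClosed_biUnion fun c _ => hclosed c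

end Orbit

/-! ### The orbit of a fixed point -/

section Iterates

variable {s : ℤ → ℤ}

lemma le_iterate (hs : ∀ i, i < s i) (k : ℕ) (i : ℤ) : i + k ≤ s^[k] i := by
  induction k with
  | zero => simp
  | succ k ih =>
    rw [Function.iterate_succ_apply']
    have := hs (s^[k] i)
    push_cast
    lia

lemma iterate_le {M : ℕ} (hM : ∀ i, s i ≤ i + M) (k : ℕ) (i : ℤ) : s^[k] i ≤ i + M * k := by
  induction k with
  | zero => simp
  | succ k ih =>
    rw [Function.iterate_succ_apply']
    have := hM (s^[k] i)
    push_cast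
    linarith

lemma iterate_strictMono (hs : ∀ i, i < s i) (i : ℤ) : StrictMono fun k : ℕ => s^[k] i :=
  strictMono_nat_of_lt_succ fun k => by
    rw [Function.iterate_succ_apply']
    exact hs _

end Iterates

section Orbit

variable {X : Set (ℤ → A)} {T S : Equiv.Perm X} {p : X → ℕ} {M : ℕ} {ω : X}

/-- The points of `X` that agree with `ω` on the window `[-n, n)`. -/
def centralCylinder {X : Set (ℤ → A)} (ω : X) (n : ℕ) : Set X :=
  {x | Set.EqOn (x : ℤ → A) ω (Set.Ico (-n) n)}

lemma self_mem_centralCylinder (n : ℕ) : ω ∈ centralCylinder ω n := Set.eqOn_refl _ _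

lemma isClopen_centralCylinder [TopologicalSpace A] [DiscreteTopology A] (n : ℕ) :
    IsClopen (centralCylinder ω n) := by
  have hinter : centralCylinder ω n =
      ⋂ t ∈ Set.Ico (-n : ℤ) n, {x : X | (x : ℤ → A) t = (ω : ℤ → A) t} := by
    ext x
    simp only [centralCylinder, Set.EqOn, Set.mem_ofPred_eq, Set.mem_iInter]
  rw [hinter]
  exact (Set.finite_Ico _ _).isClopen_biInter fun t _ =>
    (isClopen_discrete {(ω : ℤ → A) t}).preimage ((continuous_apply t).comp continuous_subtype_val)

lemma lt_orbitStep {X : Type*} {T : Equiv.Perm X} {p : X → ℕ} (hp : ∀ x, 1 ≤ p x) (x : X) (i : ℤ) :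
    i < orbitStep T p x i := by
  have := hp ((T ^ i) x)
  simp only [orbitStep]
  lia

lemma orbitStep_le {X : Type*} {T : Equiv.Perm X} {p : X → ℕ} {M : ℕ} (hM : ∀ x, p x ≤ M) (x : X)
    (i : ℤ) : orbitStep T p x i ≤ i + M := by
  have := hM ((T ^ i) x)
  simp only [orbitStep]
  lia

section Shift

variable (hT : ∀ x : X, (T x : ℤ → A) = shiftMap (x : ℤ → A))
include hT

lemma zpow_shift_apply (i : ℤ) (x : X) (k : ℤ) : ((T ^ i) x : ℤ → A) k = (x : ℤ → A) (k + i) := by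
  have hstep (y : X) (k : ℤ) : (T y : ℤ → A) k = (y : ℤ → A) (k + 1) := congrFun (hT y) k
  induction i generalizing k with
  | zero => simp
  | succ i ih => rw [add_comm (i : ℤ), zpow_one_add, Equiv.Perm.mul_apply, hstep, ih, add_assoc]
  | pred i ih =>
    rw [← sub_add_cancel k 1, ← hstep, ← Equiv.Perm.mul_apply, ← zpow_one_add, add_sub_cancel, ih]
    exact congrArg (x : ℤ → A) (by lia)

lemma eqOn_zpow_iff {i i' : ℤ} {L : ℕ} :
    Set.EqOn ((T ^ i) ω : ℤ → A) ((T ^ i') ω) (Set.Ico (-L) L) ↔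
      Agree (ω : ℤ → A) i i' (-L) L := by
  simp only [Set.EqOn, Set.mem_Ico, and_imp, Agree, zpow_shift_apply hT, add_comm]

lemma zpow_mem_centralCylinder_iff {n : ℕ} {e : ℤ → ℤ} (he : OccurrenceEnum (ω : ℤ → A) n e)
    {i : ℤ} : (T ^ i) ω ∈ centralCylinder ω n ↔ ∃ j, e j = i := by
  rw [← he.agree_iff, ← eqOn_zpow_iff hT, zpow_zero]
  rfl

lemma not_periodic_of_shift (haper : ∀ x : X, ∀ n : ℕ, 0 < n → (T ^ n) x ≠ x) (x : X) (q : ℤ)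
    (hq : 0 < q) : ¬Function.Periodic (x : ℤ → A) q := by
  lift q to ℕ using hq.le
  intro hper
  refine haper x q (by lia) (Subtype.ext (funext fun t => ?_))
  rw [← zpow_natCast, zpow_shift_apply hT, hper]

lemma continuous_of_shift [TopologicalSpace A] : Continuous T :=
  Continuous.subtype_mk (f := fun x : X => shiftMap (x : ℤ → A)) (continuous_pi fun k =>
    (continuous_apply (k + 1)).comp continuous_subtype_val) (fun x => hT x ▸ (T x).2) |>.congr
    fun x => Subtype.ext (hT x).symm

/-- The `j`-th visit of the `T`-orbit of `ω` to the central cylinder, as a point of the cylinder. -/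
def occurrencePoint {n : ℕ} {e : ℤ → ℤ} (he : OccurrenceEnum (ω : ℤ → A) n e) (j : ℤ) :
    centralCylinder ω n :=
  ⟨(T ^ e j) ω, (zpow_mem_centralCylinder_iff hT he).mpr ⟨j, rfl⟩⟩

lemma denseRange_occurrencePoint [TopologicalSpace A] [DiscreteTopology A] {n : ℕ} {e : ℤ → ℤ}
    (he : OccurrenceEnum (ω : ℤ → A) n e) (hdense : Dense (Set.range fun i : ℤ => (T ^ i) ω)) :
    DenseRange (occurrencePoint hT he) := by
  rw [DenseRange, Subtype.dense_iff, ← Set.range_comp]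
  refine (hdense.open_subset_closure_inter (isClopen_centralCylinder n).isOpen).trans
    (closure_mono ?_)
  rintro _ ⟨hmem, i, rfl⟩
  obtain ⟨j, rfl⟩ := (zpow_mem_centralCylinder_iff hT he).mp hmem
  exact ⟨j, rfl⟩

lemma exists_two_letter_recurrence [TopologicalSpace A] [DiscreteTopology A] [CompactSpace X]
    (hTmin : ∀ x : X, Dense (Set.range fun n : ℤ => (T ^ n) x)) (ω : X) :
    ∃ D : ℕ, ∀ i i₀ : ℤ, ∃ i', i₀ ≤ i' ∧ i' < i₀ + D ∧ Agree (ω : ℤ → A) i i' 0 2 := by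
  have hletters : Continuous fun x : X => ((x : ℤ → A) 0, (x : ℤ → A) 1) :=
    ((continuous_apply 0).comp continuous_subtype_val).prodMk
      ((continuous_apply 1).comp continuous_subtype_val)
  obtain ⟨D, hD⟩ := exists_bound_recurrence (continuous_of_shift hT) hTmin
    (IsLocallyConstant.iff_continuous _ |>.mpr hletters)
  refine ⟨D, fun i i₀ => ?_⟩
  obtain ⟨k, hkD, hk⟩ := hD ((T ^ i₀) ω) ((T ^ i) ω)
  rw [← zpow_natCast, ← Equiv.Perm.mul_apply, ← zpow_add] at hk
  simp only [zpow_shift_apply hT, Prod.mk.injEq, zero_add] at hk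
  refine ⟨k + i₀, by lia, by lia, fun t ht ht' => ?_⟩
  obtain rfl | rfl : t = 0 ∨ t = 1 := by lia
  · simpa only [add_zero] using hk.1.symm
  · rw [add_comm i, add_comm _ (1 : ℤ), hk.2]

end Shift

section Speedup

variable (hT : ∀ x : X, (T x : ℤ → A) = shiftMap (x : ℤ → A)) (hSp : ∀ x, S x = (T ^ p x) x)
  (hp : ∀ x, 1 ≤ p x)
include hT hSp hp

lemma exists_return_index {n : ℕ} {e : ℤ → ℤ} (he : OccurrenceEnum (ω : ℤ → A) n e) {j : ℤ} {r : ℕ}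
    (hr : IsFirstReturn S (centralCylinder ω n) ((T ^ e j) ω) r) :
    ∃ j', j < j' ∧ (orbitStep T p ω)^[r] (e j) = e j' ∧
      ∀ i, j < i → (∃ k : ℕ, (orbitStep T p ω)^[k] (e j) = e i) → j' ≤ i := by
  have hmono := iterate_strictMono (lt_orbitStep (T := T) hp ω) (e j)
  have hmem (k : ℕ) : (S ^ k) ((T ^ e j) ω) ∈ centralCylinder ω n ↔
      ∃ i, e i = (orbitStep T p ω)^[k] (e j) := by
    rw [pow_zpow_apply hSp, zpow_mem_centralCylinder_iff hT he]
  obtain ⟨j', hj'⟩ := (hmem r).mp hr.mem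
  refine ⟨j', he.strictMono.lt_iff_lt.mp (hj' ▸ hmono hr.pos), hj'.symm, fun i hji ⟨k, hk⟩ => ?_⟩
  have hkpos : 0 < k := hmono.lt_iff_lt.mp ((he.strictMono hji).trans_eq hk.symm)
  rw [← he.strictMono.le_iff_le, hj', ← hk, hmono.le_iff_le]
  exact hr.le hkpos ((hmem k).mpr ⟨i, hk.symm⟩)

/- Both orbits next meet the occurrences at the same index `j'`; between the indices `j` and `j'`
the occurrences of the longer word are further apart by a factor larger than `M`, the largest step
of the speedup. -/
lemma exists_common_return {n m G : ℕ} {e e' : ℤ → ℤ} (hM : ∀ x, p x ≤ M)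
    (he : OccurrenceEnum (ω : ℤ → A) n e) (he' : OccurrenceEnum (ω : ℤ → A) m e')
    (hcross : ∀ j j', j ≤ j' → ((∃ k : ℕ, (orbitStep T p ω)^[k] (e j) = e j') ↔
      ∃ k : ℕ, (orbitStep T p ω)^[k] (e' j) = e' j'))
    (hgap : ∀ j, e (j + 1) - e j ≤ G) (hgap' : ∀ j, M * G < e' (j + 1) - e' j) {j : ℤ} {r r' : ℕ}
    (hr : IsFirstReturn S (centralCylinder ω n) ((T ^ e j) ω) r)
    (hr' : IsFirstReturn S (centralCylinder ω m) ((T ^ e' j) ω) r') :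
    ∃ j', (S ^ r) ((T ^ e j) ω) = (T ^ e j') ω ∧ (S ^ r') ((T ^ e' j) ω) = (T ^ e' j') ω ∧
      r < r' := by
  obtain ⟨j₁, hj₁, hit₁, hmin₁⟩ := exists_return_index hT hSp hp he hr
  obtain ⟨j₂, hj₂, hit₂, hmin₂⟩ := exists_return_index hT hSp hp he' hr'
  obtain rfl : j₁ = j₂ := le_antisymm (hmin₁ _ hj₂ ((hcross _ _ hj₂.le).mpr ⟨r', hit₂⟩))
    (hmin₂ _ hj₁ ((hcross _ _ hj₁.le).mp ⟨r, hit₁⟩))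
  refine ⟨j₁, by rw [pow_zpow_apply hSp, hit₁], by rw [pow_zpow_apply hSp, hit₂], ?_⟩
  have hstep := le_iterate (lt_orbitStep (T := T) hp ω) r (e j)
  have hstep' := iterate_le (orbitStep_le (T := T) hM ω) r' (e' j)
  rw [hit₁] at hstep
  rw [hit₂] at hstep'
  have hlt : (M : ℤ) * r < M * r' := calc
    (M : ℤ) * r ≤ M * ((j₁ - j) * G) := by
      gcongr
      linarith [sub_le_mul_of_gap_le hgap hj₁.le]
    _ < (j₁ - j) * (M * G + 1) := by linarith
    _ ≤ M * r' := by
      linarith [mul_le_sub_of_le_gap (fun i => Int.add_one_le_of_lt (hgap' i)) hj₁.le]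
  exact_mod_cast lt_of_mul_lt_mul_left hlt (by lia)

end Speedup

end Orbit

section SelfInduced

variable [UniformSpace A] [DiscreteUniformity A] {X : Set (ℤ → A)} [CompactSpace X]
  {T S : Equiv.Perm X} {p : X → ℕ} {M : ℕ} {ω : X}

theorem isSelfInduced_of_inflation [Finite A] {f : ℤ → ℤ}
    (hT : ∀ x : X, (T x : ℤ → A) = shiftMap (x : ℤ → A))
    (haper : ∀ x : X, ∀ n : ℕ, 0 < n → (T ^ n) x ≠ x) (hp : ∀ x, 1 ≤ p x) (hM : ∀ x, p x ≤ M)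
    (hS : Continuous S) (hSp : ∀ x, S x = (T ^ p x) x)
    (hSmin : ∀ x : X, Dense (Set.range fun n : ℤ => (S ^ n) x))
    (hf : Inflation (ω : ℤ → A) f) (htwo : ∀ j, 2 ≤ f (j + 1) - f j) : IsSelfInduced S := by
  have hTdense (x : X) := dense_zpow_of_speedup hSp (hSmin x)
  obtain ⟨K, hK⟩ := exists_eqOn_imp_eq
    (continuous_of_speedup (continuous_of_shift hT) hS haper hSp hM)
  have hlocal (i i' : ℤ) (h : Agree (ω : ℤ → A) i i' (-K) K) :
      orbitStep T p ω i - i = orbitStep T p ω i' - i' := by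
    simp only [orbitStep, hK _ _ ((eqOn_zpow_iff hT).mpr h), add_sub_cancel_left]
  obtain ⟨D, hD⟩ := exists_two_letter_recurrence hT hTdense ω
  obtain ⟨C, hC⟩ := hf.exists_linearlyRecurrent htwo hD
  obtain ⟨n, m, G, G', e, e', he, he', hsame, hcross, hgap, hgap', hlong⟩ :=
    exists_equivalent_returns (s := orbitStep T p ω) hf htwo hf.exists_gap_le hC
      (not_periodic_of_shift hT haper ω) (lt_orbitStep hp ω) (orbitStep_le hM ω)
      hlocal
  have hV (n : ℕ) : IsClopen (centralCylinder ω n) := isClopen_centralCylinder n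
  have hreturn (n : ℕ) (x : X) := exists_isFirstReturn hS hSmin (hV n).isOpen
    ⟨ω, self_mem_centralCylinder n⟩ x
  obtain ⟨g, hg⟩ := exists_homeomorph_of_eqOn (hV n).isClosed (hV m).isClosed
    (denseRange_occurrencePoint hT he (hTdense ω)) (denseRange_occurrencePoint hT he' (hTdense ω))
    (fun L => by
      simp only [occurrencePoint, eqOn_zpow_iff hT]
      exact he.exists_agree_imp_agree he' hgap (fun j j' => (hsame j j').mp) L)
    (fun L => by
      simp only [occurrencePoint, eqOn_zpow_iff hT]
      exact he'.exists_agree_imp_agree he hgap' (fun j j' => (hsame j j').mpr) L)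
  have : Nonempty X := ⟨ω⟩
  refine isSelfInduced_of_lengthensReturns
    (exists_symm_pow_mem hS hSmin (hV n).isOpen ⟨ω, self_mem_centralCylinder n⟩) hS (hV n)
    (hV m).isOpen g (lengthensReturns_of_dense hS (hV n) (hV m) g.continuous
      (denseRange_occurrencePoint hT he (hTdense ω)) (fun b => hreturn n b) (fun b => hreturn m b)
      ?_)
  rintro _ ⟨j, rfl⟩
  obtain ⟨r, hr⟩ := hreturn n ((T ^ e j) ω)
  obtain ⟨r', hr'⟩ := hreturn m ((T ^ e' j) ω)
  obtain ⟨j', hj', hj'', hlt⟩ := exists_common_return hT hSp hp hM he he' hcross hgap hlong hr hr'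
  exact ⟨occurrencePoint hT he j', r, r', hr, hj', by rwa [hg], by rw [hg, hg]; exact hj'', hlt⟩

end SelfInduced

/-! ### Fixed points of substitutions -/

section Iterates

variable {Θ : A → List A}

lemma iterate_flatMap (θ : A → List A) (k : ℕ) (w : List A) :
    (fun w : List A => w.flatMap θ)^[k] w = w.flatMap (substIter θ k) := by
  induction k generalizing w with
  | zero => exact (List.flatMap_singleton' w).symm
  | succ k ih =>
    have hsucc : substIter θ (k + 1) = fun a => (θ a).flatMap (substIter θ k) := by
      funext a
      rw [substIter, Function.iterate_succ_apply, ih, List.flatMap_singleton]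
    rw [Function.iterate_succ_apply, ih, List.flatMap_assoc, hsucc]

lemma substIter_add (θ : A → List A) (j k : ℕ) (a : A) :
    substIter θ (j + k) a = (substIter θ k a).flatMap (substIter θ j) := by
  rw [substIter, Function.iterate_add_apply, iterate_flatMap, substIter]

lemma substIter_one (θ : A → List A) (a : A) : substIter θ 1 a = θ a := by
  rw [substIter, Function.iterate_one, List.flatMap_singleton]

lemma substIter_succ (θ : A → List A) (k : ℕ) (a : A) :
    substIter θ (k + 1) a = (substIter θ k a).flatMap θ := by
  rw [substIter, Function.iterate_succ_apply', substIter]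

lemma substIter_substIter (θ : A → List A) (k m : ℕ) (a : A) :
    substIter (substIter θ k) m a = substIter θ (k * m) a := by
  induction m with
  | zero => rfl
  | succ m ih => rw [substIter_succ, ih, ← substIter_add, mul_add_one, add_comm]

lemma two_mul_length_le_length_flatMap (hlen : ∀ a, 2 ≤ (Θ a).length) (w : List A) :
    2 * w.length ≤ (w.flatMap Θ).length := by
  induction w with
  | nil => simp
  | cons a w ih =>
    have := hlen a
    simp only [List.length_cons, List.flatMap_cons, List.length_append]
    lia

lemma lt_length_substIter (hlen : ∀ a, 2 ≤ (Θ a).length) (m : ℕ) (a : A) :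
    m < (substIter Θ m a).length := by
  induction m with
  | zero => exact Nat.one_pos
  | succ m ih =>
    have := two_mul_length_le_length_flatMap hlen (substIter Θ m a)
    rw [substIter_succ]
    lia

lemma head?_flatMap {first : A → A} (hfirst : ∀ a, (Θ a).head? = some (first a)) (w : List A) :
    (w.flatMap Θ).head? = w.head?.map first := by
  cases w <;> simp [hfirst]

lemma getLast?_flatMap {last : A → A} (hlast : ∀ a, (Θ a).getLast? = some (last a)) (w : List A) :
    (w.flatMap Θ).getLast? = w.getLast?.map last := by
  obtain rfl | ⟨w, a, rfl⟩ := List.eq_nil_or_concat' w <;> simp [hlast]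

lemma head?_substIter {first : A → A} (hfirst : ∀ a, (Θ a).head? = some (first a)) (m : ℕ) (a : A) :
    (substIter Θ m a).head? = some (first^[m] a) := by
  induction m with
  | zero => rfl
  | succ m ih =>
    rw [substIter_succ, head?_flatMap hfirst, ih, Option.map_some, Function.iterate_succ_apply']

lemma getLast?_substIter {last : A → A} (hlast : ∀ a, (Θ a).getLast? = some (last a)) (m : ℕ)
    (a : A) : (substIter Θ m a).getLast? = some (last^[m] a) := by
  induction m with
  | zero => rfl
  | succ m ih =>
    rw [substIter_succ, getLast?_flatMap hlast, ih, Option.map_some, Function.iterate_succ_apply']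

lemma pair_infix_append {v w : List A} {r l : A} (hr : v.getLast? = some r)
    (hl : w.head? = some l) : [r, l] <:+: v ++ w := by
  obtain ⟨v, rfl⟩ := List.getLast?_eq_some_iff.mp hr
  obtain ⟨w, rfl⟩ := List.head?_eq_some_iff.mp hl
  exact ⟨v, w, by simp⟩

lemma append_infix_substIter_add {r l a : A} {k : ℕ} (h : [r, l] <:+: substIter Θ k a) (j : ℕ) :
    substIter Θ j r ++ substIter Θ j l <:+: substIter Θ (j + k) a := by
  rw [substIter_add]
  simpa only [List.flatMap_cons, List.flatMap_nil, List.append_nil] using h.flatMap (substIter Θ j)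

end Iterates

/-- The letters `r` and `l` on either side of the origin from which `Θ` generates a two-sided fixed
point: `Θ r` ends with `r`, `Θ l` begins with `l`, and all images have at least two letters. -/
structure IsSeed (Θ : A → List A) (r l : A) : Prop where
  getLast : (Θ r).getLast? = some r
  head : (Θ l).head? = some l
  two_le_length : ∀ a, 2 ≤ (Θ a).length

/- The last letter left of the origin and the first letter right of it evolve by a self-map of the
finite set `A × A`, so they are eventually periodic. -/
lemma exists_isSeed_of_two_le_length [Finite A] {Θ : A → List A} (hlen : ∀ a, 2 ≤ (Θ a).length)
    (a : A) : ∃ q m r l, IsSeed (substIter Θ q) r l ∧ [r, l] <:+: substIter Θ m a := by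
  have hne (b : A) : Θ b ≠ [] := List.ne_nil_of_length_pos (by have := hlen b; lia)
  let first (b : A) : A := (Θ b).head (hne b)
  let last (b : A) : A := (Θ b).getLast (hne b)
  have hfirst (m : ℕ) (b : A) : (substIter Θ m b).head? = some (first^[m] b) :=
    head?_substIter (fun b => List.head?_eq_some_head (hne b)) m b
  have hlast (m : ℕ) (b : A) : (substIter Θ m b).getLast? = some (last^[m] b) :=
    getLast?_substIter (fun b => List.getLast?_eq_some_getLast (hne b)) m b
  obtain ⟨r, l, w, hw⟩ : ∃ r l w, Θ a = r :: l :: w := by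
    match Θ a, hlen a with
    | r :: l :: w, _ => exact ⟨r, l, w, rfl⟩
  obtain ⟨m, m', hlt, hmm'⟩ :=
    Set.finite_univ.exists_lt_map_eq_of_forall_mem (f := fun m : ℕ => (last^[m] r, first^[m] l))
      fun _ => Set.mem_univ _
  obtain ⟨q, rfl⟩ := Nat.exists_eq_add_of_lt hlt
  obtain ⟨hr, hl⟩ := Prod.mk.inj hmm'
  rw [show m + q + 1 = (q + 1) + m by lia, Function.iterate_add_apply] at hr hl
  refine ⟨q + 1, m + 1, last^[m] r, first^[m] l, ⟨?_, ?_, fun b => ?_⟩, ?_⟩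
  · rw [hlast, ← hr]
  · rw [hfirst, ← hl]
  · have := lt_length_substIter hlen (q + 1) b
    lia
  · have hinfix : [r, l] <:+: substIter Θ 1 a := by
      rw [substIter_one, hw]
      exact ⟨[], w, rfl⟩
    exact (pair_infix_append (hlast m r) (hfirst m l)).trans (append_infix_substIter_add hinfix m)

lemma exists_isSeed [Finite A] [Nonempty A] {θ : A → List A}
    (hgrow : ∀ a, Filter.Tendsto (fun k => (substIter θ k a).length) Filter.atTop Filter.atTop) :
    ∃ k m r l a, IsSeed (substIter θ k) r l ∧ [r, l] <:+: substIter θ m a := by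
  obtain ⟨k, hk⟩ := (Filter.eventually_all.mpr fun a => (hgrow a).eventually_ge_atTop 2).exists
  obtain ⟨q, m, r, l, hseed, hinfix⟩ := exists_isSeed_of_two_le_length hk (Classical.arbitrary A)
  rw [funext (substIter_substIter θ k q)] at hseed
  rw [substIter_substIter] at hinfix
  exact ⟨k * q, k * m, r, l, _, hseed, hinfix⟩

/-- The word `w` occurs in `ω` at the positions `i, …, i + |w| - 1`. -/
def OccursAt (ω : ℤ → A) (w : List A) (i : ℤ) : Prop :=
  ∀ t (ht : t < w.length), w[t] = ω (i + t)

namespace OccursAt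

variable {ω : ℤ → A} {v w : List A} {i : ℤ} {a : A}

lemma append_iff :
    OccursAt ω (v ++ w) i ↔ OccursAt ω v i ∧ OccursAt ω w (i + v.length) := by
  refine ⟨fun h => ⟨fun t ht => ?_, fun t ht => ?_⟩, fun ⟨hv, hw⟩ t ht => ?_⟩
  · rw [← h t (by grind), List.getElem_append_left ht]
  · have := h (v.length + t) (by grind)
    rw [List.getElem_append_right (by lia)] at this
    simpa [add_assoc] using this
  · by_cases htv : t < v.length
    · rw [List.getElem_append_left htv, hv t htv]
    · rw [List.getElem_append_right (by lia), hw _ (by grind)]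
      congr 1
      lia

lemma singleton_iff : OccursAt ω [a] i ↔ a = ω i := by
  simp [OccursAt]

lemma cons_iff : OccursAt ω (a :: w) i ↔ a = ω i ∧ OccursAt ω w (i + 1) := by
  rw [← List.singleton_append, append_iff, singleton_iff, List.length_singleton, Nat.cast_one]

lemma ofFn_infix (h : OccursAt ω w i) {i' : ℤ} {n : ℕ} (hi : i ≤ i')
    (hn : i' + n ≤ i + w.length) :
    (List.ofFn fun t : Fin n => ω (i' + (t : ℕ))) <:+: w := by
  rw [List.infix_iff_getElem?]
  refine ⟨(i' - i).toNat, by rw [List.length_ofFn]; lia, fun t ht => ?_⟩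
  rw [List.length_ofFn] at ht
  rw [List.getElem?_eq_getElem (by lia), h, List.getElem_ofFn]
  congr 2
  push_cast
  lia

end OccursAt

section FixedPoint

variable {ω : ℤ → A} {w : List A} {Θ : A → List A} {f : ℤ → ℤ} {i : ℤ}

lemma OccursAt.sub_eq_length_flatMap (hf : ∀ j, f (j + 1) - f j = (Θ (ω j)).length)
    (hw : OccursAt ω w i) : f (i + w.length) - f i = (w.flatMap Θ).length := by
  induction w generalizing i with
  | nil => simp
  | cons a w ih =>
    obtain ⟨rfl, htail⟩ := cons_iff.mp hw
    rw [List.length_cons, List.flatMap_cons, List.length_append, Nat.cast_add, Nat.cast_add,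
      ← ih htail, ← hf, Nat.cast_one, add_assoc, add_comm (1 : ℤ)]
    ring

lemma OccursAt.occursAt_of_flatMap (hf : ∀ j, f (j + 1) - f j = (Θ (ω j)).length)
    (hw : OccursAt ω w i) (himage : OccursAt ω (w.flatMap Θ) (f i)) {j : ℤ} (hij : i ≤ j)
    (hj : j < i + w.length) : OccursAt ω (Θ (ω j)) (f j) := by
  induction w generalizing i with
  | nil => simp only [List.length_nil] at hj; lia
  | cons a w ih =>
    obtain ⟨rfl, htail⟩ := cons_iff.mp hw
    rw [List.flatMap_cons, append_iff, ← hf, add_sub_cancel] at himage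
    obtain rfl | hlt := hij.eq_or_lt
    · exact himage.1
    · refine ih htail himage.2 hlt ?_
      rw [List.length_cons] at hj
      push_cast at hj
      lia

lemma inflation_of_occursAt (hzero : f 0 = 0) (hf : ∀ j, f (j + 1) - f j = (Θ (ω j)).length)
    (hne : ∀ a, Θ a ≠ []) (hoccurs : ∀ j, OccursAt ω (Θ (ω j)) (f j)) : Inflation ω f where
  zero := hzero
  lt_succ j := by
    have := hf j
    have := List.length_pos_of_ne_nil (hne (ω j))
    lia
  gap_eq {j j'} hj := by rw [hf, hf, hj]
  agree {j j'} hj t ht ht' := by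
    lift t to ℕ using ht
    rw [hf] at ht'
    have h := hoccurs j t (by lia)
    have h' := hoccurs j' t (by rw [← hj]; lia)
    rw [← h, ← h']
    simp only [hj]

lemma exists_limit_of_prefix_chain {w : ℕ → List A} (hchain : ∀ m, w m <+: w (m + 1))
    (hlen : ∀ m, m < (w m).length) :
    ∃ u : ℕ → A, ∀ m t (ht : t < (w m).length), (w m)[t] = u t := by
  have hmono {m m' : ℕ} (h : m ≤ m') : w m <+: w m' :=
    Nat.le_induction List.prefix_rfl (fun k _ ih => ih.trans (hchain k)) m' h
  refine ⟨fun t => (w t)[t]'(hlen t), fun m t ht => ?_⟩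
  rcases le_total m t with h | h
  · exact (hmono h).getElem ht
  · exact ((hmono h).getElem (hlen t)).symm

lemma IsSeed.exists_occursAt {r l : A} (h : IsSeed Θ r l) :
    ∃ ω : ℤ → A, ∀ m,
      OccursAt ω (substIter Θ m r ++ substIter Θ m l) (-(substIter Θ m r).length) := by
  obtain ⟨u, hu⟩ := exists_limit_of_prefix_chain (w := fun m => substIter Θ m l) (fun m => by
    obtain ⟨w, hw⟩ := List.head?_eq_some_iff.mp h.head
    exact ⟨w.flatMap (substIter Θ m), by
      rw [substIter_add, substIter_one, hw, List.flatMap_cons]⟩)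
    fun m => lt_length_substIter h.two_le_length m l
  obtain ⟨v, hv⟩ := exists_limit_of_prefix_chain (w := fun m => (substIter Θ m r).reverse)
    (fun m => by
      obtain ⟨w, hw⟩ := List.getLast?_eq_some_iff.mp h.getLast
      exact List.reverse_prefix.mpr ⟨w.flatMap (substIter Θ m), by
        rw [substIter_add, substIter_one, hw, List.flatMap_append, List.flatMap_singleton]⟩)
    fun m => by simpa using lt_length_substIter h.two_le_length m r
  refine ⟨Int.rec u v, fun m => OccursAt.append_iff.mpr ⟨fun t ht => ?_, fun t ht => ?_⟩⟩
  · have hneg : -((substIter Θ m r).length : ℤ) + t =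
        Int.negSucc ((substIter Θ m r).length - 1 - t) := by
      rw [Int.negSucc_eq]
      lia
    rw [hneg]
    refine Eq.trans ?_ (hv m ((substIter Θ m r).length - 1 - t) (by grind))
    grind
  · rw [neg_add_cancel, zero_add, hu m t ht]
    rfl

/- The image of the central word `Θ^m(r)Θ^m(l)` is the central word of the next level, so the
positions `f j` cut `ω` into the images of its letters. -/
lemma IsSeed.exists_inflation {r l : A} (h : IsSeed Θ r l)
    (hω : ∀ m, OccursAt ω (substIter Θ m r ++ substIter Θ m l) (-(substIter Θ m r).length)) :
    ∃ f, Inflation ω f ∧ ∀ j, 2 ≤ f (j + 1) - f j := by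
  obtain ⟨f, hzero, hf⟩ := exists_antidifference fun j => ((Θ (ω j)).length : ℤ)
  have hcentral (m : ℕ) :
      f (-(substIter Θ m r).length) = -(substIter Θ (m + 1) r).length := by
    have := (OccursAt.append_iff.mp (hω m)).1.sub_eq_length_flatMap hf
    rw [neg_add_cancel, hzero, ← substIter_succ] at this
    lia
  refine ⟨f, inflation_of_occursAt hzero hf (fun a => List.ne_nil_of_length_pos ?_) fun j => ?_,
    fun j => ?_⟩
  · linarith [h.two_le_length a]
  · have hr := lt_length_substIter h.two_le_length j.natAbs r
    have hl := lt_length_substIter h.two_le_length j.natAbs l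
    refine (hω j.natAbs).occursAt_of_flatMap hf ?_ (by lia) ?_
    · rw [List.flatMap_append, ← substIter_succ, ← substIter_succ, hcentral]
      exact hω (j.natAbs + 1)
    · rw [List.length_append]
      lia
  · rw [hf]
    exact_mod_cast h.two_le_length (ω j)

lemma IsSeed.mem_substShift {θ : A → List A} {r l a : A} {k m₀ : ℕ}
    (h : IsSeed (substIter θ k) r l) (hrl : [r, l] <:+: substIter θ m₀ a)
    (hω : ∀ m, OccursAt ω (substIter (substIter θ k) m r ++ substIter (substIter θ k) m l)
      (-(substIter (substIter θ k) m r).length)) : ω ∈ substShift θ := by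
  intro i n
  have hr := lt_length_substIter h.two_le_length (i.natAbs + n) r
  have hl := lt_length_substIter h.two_le_length (i.natAbs + n) l
  refine ⟨k * (i.natAbs + n) + m₀, a, ((hω (i.natAbs + n)).ofFn_infix (by lia) ?_).trans ?_⟩
  · rw [List.length_append]
    lia
  · rw [substIter_substIter, substIter_substIter]
    exact append_infix_substIter_add hrl _

end FixedPoint

lemma exists_mem_substShift_inflation [Finite A] [Nonempty A] {θ : A → List A}
    (hgrow : ∀ a, Filter.Tendsto (fun k => (substIter θ k a).length) Filter.atTop Filter.atTop) :
    ∃ ω ∈ substShift θ, ∃ f, Inflation ω f ∧ ∀ j, 2 ≤ f (j + 1) - f j := by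
  obtain ⟨k, m, r, l, a, hseed, hinfix⟩ := exists_isSeed hgrow
  obtain ⟨ω, hω⟩ := hseed.exists_occursAt
  exact ⟨ω, hseed.mem_substShift hinfix hω, hseed.exists_inflation hω⟩

lemma isClosed_substShift [TopologicalSpace A] [DiscreteTopology A] (θ : A → List A) :
    IsClosed (substShift θ) := by
  have hinter : substShift θ = ⋂ (i : ℤ) (n : ℕ),
      (fun (x : ℤ → A) (t : Fin n) => x (i + (t : ℕ))) ⁻¹'
        {w | ∃ (k : ℕ) (a : A), List.ofFn w <:+: substIter θ k a} := by
    ext x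
    simp [substShift]
  rw [hinter]
  exact isClosed_iInter fun i => isClosed_iInter fun n =>
    (isClosed_discrete _).preimage (continuous_pi fun t => continuous_apply _)

lemma iterate_shiftMap {X : Set (ℤ → A)} {T : Equiv.Perm X}
    (hT : ∀ x : X, (T x : ℤ → A) = shiftMap (x : ℤ → A)) (n : ℕ) (x : X) :
    ((T ^ n) x : ℤ → A) = shiftMap^[n] x := by
  induction n with
  | zero => rfl
  | succ n ih => rw [pow_succ', Equiv.Perm.mul_apply, hT, ih, Function.iterate_succ_apply']

end Speedup

theorem boundedSpeedup_of_substitution_selfInduced_general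
    {A : Type*} [Finite A] [Nonempty A] [TopologicalSpace A] [DiscreteTopology A]
    {θ : A → List A}
    (hgrow : ∀ a, Filter.Tendsto (fun k => (substIter θ k a).length) Filter.atTop Filter.atTop)
    (haper : SubstAperiodic θ) {T : Equiv.Perm (substShift θ)}
    (hT : ∀ x : substShift θ, (T x : ℤ → A) = shiftMap (x : ℤ → A))
    {p : substShift θ → ℕ} (hp1 : ∀ x, 1 ≤ p x) (hpbdd : ∃ M : ℕ, ∀ x, p x ≤ M)
    {S : Equiv.Perm (substShift θ)} (hSc : Continuous S) (hSp : ∀ x, S x = (T ^ p x) x)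
    (hSmin : ∀ x : substShift θ, Dense (Set.range fun n : ℤ => (S ^ n) x)) :
    Speedup.IsSelfInduced S := by
  let _ : UniformSpace A := (⊥ : UniformSpace A).replaceTopology DiscreteTopology.eq_bot
  have : DiscreteUniformity A := ⟨UniformSpace.replaceTopology_eq _ _⟩
  have : CompactSpace (substShift θ) :=
    isCompact_iff_compactSpace.mp (Speedup.isClosed_substShift θ).isCompact
  obtain ⟨M, hM⟩ := hpbdd
  obtain ⟨ω, hω, f, hf, htwo⟩ := Speedup.exists_mem_substShift_inflation hgrow
  exact Speedup.isSelfInduced_of_inflation (ω := ⟨ω, hω⟩) hT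
    (fun x n hn h => haper x x.2 n hn (by rw [← Speedup.iterate_shiftMap hT, h]))
    hp1 hM hSc hSp hSmin hf htwo

/-- A minimal bounded speedup `S` of a proper, primitive, aperiodic
substitution subshift `(X^θ, T)` is self-induced: `(X^θ, S)` is topologically conjugate to
the first-return map of `S` on some proper nonempty clopen subset `U`. -/
theorem boundedSpeedup_of_substitution_selfInduced
    {A : Type*} [Fintype A] [Nonempty A] [TopologicalSpace A] [DiscreteTopology A]
    (θ : A → List A) (hθne : ∀ a, θ a ≠ [])
    (hproper : SubstProper θ) (hprim : SubstPrimitive θ) (haper : SubstAperiodic θ)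
    (T : Equiv.Perm ↥(substShift θ))
    (hT : ∀ x : ↥(substShift θ), ((T x : ℤ → A)) = shiftMap (x : ℤ → A))
    (p : ↥(substShift θ) → ℕ) (hp1 : ∀ x, 1 ≤ p x) (hpbdd : ∃ M : ℕ, ∀ x, p x ≤ M)
    (S : Equiv.Perm ↥(substShift θ)) (hSc : Continuous S) (hSc' : Continuous S.symm)
    (hSp : ∀ x, S x = (T ^ p x) x)
    (hSmin : ∀ x : ↥(substShift θ), Dense (Set.range fun n : ℤ => (S ^ n) x)) :
    ∃ U : Set ↥(substShift θ), IsClopen U ∧ U.Nonempty ∧ U ≠ Set.univ ∧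
      ∃ (φ : ↥(substShift θ) ≃ₜ ↥U) (r : ↥U → ℕ),
        (∀ y : ↥U, 1 ≤ r y ∧ (S ^ r y) (y : ↥(substShift θ)) ∈ U ∧
          ∀ n : ℕ, 1 ≤ n → n < r y → (S ^ n) (y : ↥(substShift θ)) ∉ U) ∧
        ∀ x : ↥(substShift θ),
          ((φ (S x) : ↥U) : ↥(substShift θ)) =
            (S ^ r (φ x)) ((φ x : ↥U) : ↥(substShift θ)) := by
  exact boundedSpeedup_of_substitution_selfInduced_general hprim.2 haper hT hp1 hpbdd hSc hSp hSmin
end
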